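/- arXiv:0711.3159 — 3 statements merged into one kernel-verified Lean document; each statement's English description precedes it below -/
import Mathlib

section
/- Let G be an arbitrary set of positive integers. Then there exists an infinite set R = {r₁, r₂, …} of positive integers such that for every positive integer k, the set R^k = {r₁^k, r₂^k, …} of k-th powers of elements of R is intersective if and only if k ∈ G. -/
open Filter MeasureTheory

/-- The upper (Banach) density of a set of integers:
`limsup_{N→∞} |Λ ∩ {-N,…,N}| / (2N+1)`. -/
noncomputable def upperDensity (Λ : Set ℤ) : ℝ :=
  letI := Classical.decPred fun x : ℤ => x ∈ Λ
  limsup (fun N : ℕ =>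
    (((Finset.Icc (-(N : ℤ)) (N : ℤ)).filter fun x => x ∈ Λ).card : ℝ) / (2 * N + 1))
    atTop

/-- A set `R` of integers is intersective if every set of integers of positive upper
density contains two elements whose difference is a nonzero element of `R`. -/
def Intersective (R : Set ℤ) : Prop :=
  ∀ Λ : Set ℤ, 0 < upperDensity Λ →
    ∃ r ∈ R, r ≠ 0 ∧ ∃ m : ℤ, m ∈ Λ ∧ m + r ∈ Λ

/-!
Fix an element `α` of infinite order of the circle `ℝ/ℤ`. If `n ^ k • α` stays away from `0` for all
but finitely many `n ∈ R`, then the `k`-th powers of `R` are not intersective: a colouring of `ℤ` by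
small Bohr sets of `α` separates the endpoints of every such difference.

Conversely, let `B` be a finite set of exponents with `k ∉ B`. By Weyl's theorem `cos (2π n ^ k x)`
averages to `0` over the times `n` at which `n ^ b • α` is far from `0` for all `b ∈ B`, for every
`x` of infinite order; a torsion point `x` is dealt with by taking only multiples `n` of `m!`, at
which the cosine is `1` once `m` is large. Integrated against a finite measure and combined with
Hahn–Banach and the Riesz representation theorem, this yields convex combinations of the functions
`cos (2π n ^ k x)` that are `> -δ` everywhere. Such a trigonometric polynomial, evaluated at the
characters of a large cyclic group, forces every set of density `> δ` to contain two elements whose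
difference is one of its finitely many frequencies `n ^ k`.

So there is a finite block `F j` of times `n > j` at which `n ^ b • α` is far from `0` for all
`b ≤ j` outside `G`, and whose `k`-th powers, for `k ≤ j` in `G`, meet the differences of every set
of upper density `> 1 / (j + 1)`. Take `R = ⋃ j, F j`.
-/

open Topology
open scoped RealInnerProductSpace fwdDiff

section Cesaro

section Module

variable {E F : Type*} [AddCommGroup E] [Module ℝ E] [AddCommGroup F] [Module ℝ F]

/-- The average `(u 1 + ⋯ + u N) / N`. Starting at `1` guarantees that `q * n ≥ q` for every
index `n` of an average along the multiples of `q`. -/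
noncomputable def cesaro (u : ℕ → E) (N : ℕ) : E :=
  (N : ℝ)⁻¹ • ∑ n ∈ Finset.range N, u (n + 1)

lemma cesaro_add (u v : ℕ → E) (N : ℕ) :
    cesaro (fun n => u n + v n) N = cesaro u N + cesaro v N := by
  simp only [cesaro, Finset.sum_add_distrib, smul_add]

lemma cesaro_sub (u v : ℕ → E) (N : ℕ) :
    cesaro (fun n => u n - v n) N = cesaro u N - cesaro v N := by
  simp only [cesaro, Finset.sum_sub_distrib, smul_sub]

lemma cesaro_sum {ι : Type*} (s : Finset ι) (u : ι → ℕ → E) (N : ℕ) :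
    cesaro (fun n => ∑ i ∈ s, u i n) N = ∑ i ∈ s, cesaro (u i) N := by
  simp only [cesaro, Finset.sum_comm (s := Finset.range N), Finset.smul_sum]

lemma map_cesaro {L : Type*} [FunLike L E F] [LinearMapClass L ℝ E F] (φ : L) (u : ℕ → E)
    (N : ℕ) : φ (cesaro u N) = cesaro (fun n => φ (u n)) N := by
  simp only [cesaro, map_smul, map_sum]

lemma cesaro_const_mul {A : Type*} [Ring A] [Algebra ℝ A] (a : A) (u : ℕ → A) (N : ℕ) :
    cesaro (fun n => a * u n) N = a * cesaro u N :=
  (map_cesaro (LinearMap.mulLeft ℝ a) u N).symm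

lemma cesaro_mono {u v : ℕ → ℝ} (h : ∀ n, 0 < n → u n ≤ v n) (N : ℕ) :
    cesaro u N ≤ cesaro v N := by
  unfold cesaro
  gcongr with n
  exact h _ n.succ_pos

lemma cesaro_const (a : E) {N : ℕ} (hN : N ≠ 0) : cesaro (fun _ => a) N = a := by
  have hN' : (N : ℝ) ≠ 0 := by exact_mod_cast hN
  simp only [cesaro, Finset.sum_const, Finset.card_range, ← Nat.cast_smul_eq_nsmul ℝ,
    inv_smul_smul₀ hN']

end Module

variable {E : Type*} [NormedAddCommGroup E] [NormedSpace ℝ E] {u : ℕ → E} {C : ℝ}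

lemma tendsto_cesaro_const (a : E) : Tendsto (cesaro fun _ => a) atTop (𝓝 a) :=
  tendsto_const_nhds.congr' <| (eventually_ne_atTop 0).mono fun _ hN => (cesaro_const a hN).symm

lemma norm_cesaro_le (hu : ∀ n, ‖u n‖ ≤ C) (N : ℕ) : ‖cesaro u N‖ ≤ C := by
  have hsum : ‖∑ n ∈ Finset.range N, u (n + 1)‖ ≤ N * C := by
    simpa using norm_sum_le_of_le (Finset.range N) fun n _ => hu (n + 1)
  rcases N.eq_zero_or_pos with rfl | hN
  · simpa [cesaro] using (norm_nonneg _).trans (hu 0)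
  · rw [cesaro, norm_smul, norm_inv, Real.norm_natCast, inv_mul_le_iff₀ (by exact_mod_cast hN)]
    exact hsum

lemma tendsto_cesaro_shift_sub (hu : ∀ n, ‖u n‖ ≤ C) (h : ℕ) :
    Tendsto (fun N => cesaro (fun n => u (n + h)) N - cesaro u N) atTop (𝓝 0) := by
  induction h with
  | zero => simp
  | succ h ih =>
    have htel (N : ℕ) : cesaro (fun n => u (n + (h + 1))) N - cesaro (fun n => u (n + h)) N
        = (N : ℝ)⁻¹ • (u (N + 1 + h) - u (1 + h)) := by
      have := Finset.sum_range_sub (fun n => u (n + 1 + h)) N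
      rw [zero_add] at this
      rw [cesaro, cesaro, ← smul_sub, ← Finset.sum_sub_distrib, ← this]
      simp only [add_right_comm, ← add_assoc]
    have hbound (N : ℕ) : ‖(N : ℝ)⁻¹ • (u (N + 1 + h) - u (1 + h))‖ ≤ (N : ℝ)⁻¹ * (C + C) := by
      rw [norm_smul, norm_inv, Real.norm_natCast]
      gcongr
      exact norm_sub_le_of_le (hu _) (hu _)
    have hstep := squeeze_zero_norm hbound <| by
      simpa using tendsto_inv_atTop_nhds_zero_nat.mul_const (C + C)
    simpa [← htel] using hstep.add ih

end Cesaro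

section VanDerCorputTrick

variable {E : Type*} [NormedAddCommGroup E]

lemma norm_cesaro_sq_le [NormedSpace ℝ E] (u : ℕ → E) (N : ℕ) :
    ‖cesaro u N‖ ^ 2 ≤ cesaro (fun n => ‖u n‖ ^ 2) N := by
  rcases N.eq_zero_or_pos with rfl | hN
  · simp [cesaro]
  have : (N : ℝ) ≠ 0 := Nat.cast_ne_zero.2 hN.ne'
  calc ‖cesaro u N‖ ^ 2
      ≤ ((N : ℝ)⁻¹ * ∑ n ∈ Finset.range N, ‖u (n + 1)‖) ^ 2 := by
        rw [cesaro, norm_smul, norm_inv, Real.norm_natCast]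
        gcongr
        exact norm_sum_le _ _
    _ ≤ ((N : ℝ)⁻¹) ^ 2 * (N * ∑ n ∈ Finset.range N, ‖u (n + 1)‖ ^ 2) := by
        rw [mul_pow]
        gcongr
        simpa using sq_sum_le_card_mul_sum_sq (s := Finset.range N) (f := fun n => ‖u (n + 1)‖)
    _ = cesaro (fun n => ‖u n‖ ^ 2) N := by
        rw [cesaro, smul_eq_mul]
        field_simp

variable [InnerProductSpace ℝ E] {u : ℕ → E} {C : ℝ}

lemma norm_inner_le_sq (hu : ∀ n, ‖u n‖ ≤ C) (m n : ℕ) : ‖⟪u m, u n⟫‖ ≤ C ^ 2 := by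
  rw [sq]
  exact (norm_inner_le_norm _ _).trans
    (mul_le_mul (hu m) (hu n) (norm_nonneg _) ((norm_nonneg _).trans (hu m)))

lemma tendsto_cesaro_inner_shift_of_lt (hu : ∀ n, ‖u n‖ ≤ C)
    (hcor : ∀ h, 0 < h → Tendsto (cesaro fun n => ⟪u (n + h), u n⟫) atTop (𝓝 0))
    {h k : ℕ} (hlt : h < k) :
    Tendsto (cesaro fun n => ⟪u (n + k), u (n + h)⟫) atTop (𝓝 0) := by
  have hshift := tendsto_cesaro_shift_sub
    (u := fun n => ⟪u (n + (k - h)), u n⟫) (fun n => norm_inner_le_sq hu _ _) h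
  have hidx (n : ℕ) : n + h + (k - h) = n + k := by omega
  simpa [hidx] using hshift.add (hcor (k - h) (by omega))

lemma tendsto_cesaro_inner_shift (hu : ∀ n, ‖u n‖ ≤ C)
    (hcor : ∀ h, 0 < h → Tendsto (cesaro fun n => ⟪u (n + h), u n⟫) atTop (𝓝 0))
    {h k : ℕ} (hne : h ≠ k) :
    Tendsto (cesaro fun n => ⟪u (n + h), u (n + k)⟫) atTop (𝓝 0) := by
  rcases hne.lt_or_gt with hlt | hlt
  · simpa only [real_inner_comm] using tendsto_cesaro_inner_shift_of_lt hu hcor hlt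
  · exact tendsto_cesaro_inner_shift_of_lt hu hcor hlt

lemma eventually_norm_cesaro_sum_shift_sq_le (hu : ∀ n, ‖u n‖ ≤ C)
    (hcor : ∀ h, 0 < h → Tendsto (cesaro fun n => ⟪u (n + h), u n⟫) atTop (𝓝 0)) (H : ℕ) :
    ∀ᶠ N in atTop, ‖cesaro (fun n => ∑ h ∈ Finset.range H, u (n + h)) N‖ ^ 2
      ≤ H * C ^ 2 + 1 := by
  have hoff : Tendsto (fun N => ∑ h ∈ Finset.range H, ∑ k ∈ (Finset.range H).erase h,
      cesaro (fun n => ⟪u (n + h), u (n + k)⟫) N) atTop (𝓝 0) := by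
    simpa using tendsto_finsetSum (Finset.range H) fun h _ =>
      tendsto_finsetSum ((Finset.range H).erase h) fun k hk =>
        tendsto_cesaro_inner_shift hu hcor (Finset.ne_of_mem_erase hk).symm
  filter_upwards [hoff.eventually_le_const one_pos] with N hN
  have hdiag (h : ℕ) : cesaro (fun n => ⟪u (n + h), u (n + h)⟫) N ≤ C ^ 2 :=
    (Real.le_norm_self _).trans (norm_cesaro_le (fun n => norm_inner_le_sq hu _ _) N)
  calc ‖cesaro (fun n => ∑ h ∈ Finset.range H, u (n + h)) N‖ ^ 2
      ≤ cesaro (fun n => ‖∑ h ∈ Finset.range H, u (n + h)‖ ^ 2) N := norm_cesaro_sq_le _ _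
    _ = ∑ h ∈ Finset.range H, ∑ k ∈ Finset.range H,
          cesaro (fun n => ⟪u (n + h), u (n + k)⟫) N := by
        simp only [← real_inner_self_eq_norm_sq, sum_inner, inner_sum, cesaro_sum]
        exact Finset.sum_comm
    _ = ∑ h ∈ Finset.range H, cesaro (fun n => ⟪u (n + h), u (n + h)⟫) N
          + ∑ h ∈ Finset.range H, ∑ k ∈ (Finset.range H).erase h,
            cesaro (fun n => ⟪u (n + h), u (n + k)⟫) N := by
        rw [← Finset.sum_add_distrib]
        exact Finset.sum_congr rfl fun h hh => (Finset.add_sum_erase _ _ hh).symm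
    _ ≤ H * C ^ 2 + 1 := by
        gcongr
        simpa using Finset.sum_le_sum fun h (_ : h ∈ Finset.range H) => hdiag h

theorem tendsto_cesaro_of_tendsto_cesaro_inner (hu : ∀ n, ‖u n‖ ≤ C)
    (hcor : ∀ h, 0 < h → Tendsto (cesaro fun n => ⟪u (n + h), u n⟫) atTop (𝓝 0)) :
    Tendsto (cesaro u) atTop (𝓝 0) := by
  refine Metric.tendsto_nhds.2 fun ε hε => ?_
  obtain ⟨H, hH⟩ := exists_nat_gt ((2 * C ^ 2 + 4) / ε ^ 2)
  have hH0 : (0 : ℝ) < H := lt_of_le_of_lt (by positivity) hH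
  have hH1 : (1 : ℝ) ≤ H := by exact_mod_cast hH0
  have hblock : Tendsto (fun N => (H : ℝ) • cesaro u N
      - cesaro (fun n => ∑ h ∈ Finset.range H, u (n + h)) N) atTop (𝓝 0) := by
    have := tendsto_finsetSum (Finset.range H) fun h _ => (tendsto_cesaro_shift_sub hu h).neg
    simpa [cesaro_sum, ← Nat.cast_smul_eq_nsmul ℝ] using this
  filter_upwards [eventually_norm_cesaro_sum_shift_sq_le hu hcor H,
    hblock.norm.eventually_le_const (by simp : ‖(0 : E)‖ < 1)] with N hV herr
  set V := cesaro (fun n => ∑ h ∈ Finset.range H, u (n + h)) N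
  have hsq : (H * ‖cesaro u N‖) ^ 2 ≤ (1 + ‖V‖) ^ 2 := by
    have := norm_le_norm_sub_add ((H : ℝ) • cesaro u N) V
    rw [norm_smul, Real.norm_natCast] at this
    gcongr
    linarith
  have hlt : ‖cesaro u N‖ ^ 2 < ε ^ 2 := by
    rw [div_lt_iff₀ (by positivity)] at hH
    have : H * (H * ‖cesaro u N‖ ^ 2) < H * (H * ε ^ 2) := by
      nlinarith [two_mul_le_add_sq 1 ‖V‖, sq_nonneg C]
    exact lt_of_mul_lt_mul_left (lt_of_mul_lt_mul_left this hH0.le) hH0.le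
  rw [dist_zero_right]
  exact lt_of_pow_lt_pow_left₀ 2 hε.le hlt

end VanDerCorputTrick

section Weyl

variable {A : Type*} [AddCommGroup A] {u : ℕ → A} {c : A}

lemma fwdDiff_comm (h k : ℕ) (u : ℕ → A) : Δ_[h] (Δ_[k] u) = Δ_[k] (Δ_[h] u) := by
  ext n
  simp only [fwdDiff, add_right_comm n h k]
  abel

lemma apply_add_of_fwdDiff_eq_const (hu : Δ_[1] u = fun _ => c) (n h : ℕ) :
    u (n + h) = u n + h • c := by
  induction h with
  | zero => simp
  | succ h ih =>
    have hstep : u (n + h + 1) - u (n + h) = c := congrFun hu (n + h)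
    rw [← add_assoc, sub_eq_iff_eq_add.1 hstep, ih, succ_nsmul]
    abel

lemma fwdDiff_iter_fwdDiff_eq_const {d : ℕ} (hu : Δ_[1] ^[d + 1] u = fun _ => c) (h : ℕ) :
    Δ_[1] ^[d] (Δ_[h] u) = fun _ => h • c := by
  have hcomm : Function.Commute (fwdDiff h : (ℕ → A) → ℕ → A) (fwdDiff 1) := fwdDiff_comm h 1
  rw [← (hcomm.iterate_right d).eq]
  ext n
  rw [fwdDiff, apply_add_of_fwdDiff_eq_const ((Function.iterate_succ_apply' _ _ _).symm.trans hu)]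
  abel

lemma inner_addChar (χ : AddChar A Circle) (a b : A) :
    ⟪(χ a : ℂ), (χ b : ℂ)⟫ = (χ (a - b) : ℂ).re := by
  rw [real_inner_comm, Complex.inner, χ.map_sub_eq_div, div_eq_mul_inv, Circle.coe_mul,
    Circle.coe_inv_eq_conj]

lemma tendsto_cesaro_addChar_of_fwdDiff_eq_const {χ : AddChar A Circle} (hc : χ c ≠ 1)
    (hu : Δ_[1] u = fun _ => c) : Tendsto (cesaro fun n => (χ (u n) : ℂ)) atTop (𝓝 0) := by
  have hshift (N : ℕ) : cesaro (fun n => (χ (u (n + 1)) : ℂ)) N - cesaro (fun n => (χ (u n) : ℂ)) N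
      = ((χ c : ℂ) - 1) * cesaro (fun n => (χ (u n) : ℂ)) N := by
    have hmul (n : ℕ) : (χ (u (n + 1)) : ℂ) = χ c * χ (u n) := by
      rw [apply_add_of_fwdDiff_eq_const hu, one_smul, add_comm, χ.map_add_eq_mul, Circle.coe_mul]
    simp only [hmul, cesaro_const_mul, sub_one_mul]
  have hc' : (χ c : ℂ) - 1 ≠ 0 := sub_ne_zero.2 (Circle.coe_eq_one.not.2 hc)
  have hlim := tendsto_cesaro_shift_sub (u := fun n => (χ (u n) : ℂ))
      (fun n => (Circle.norm_coe _).le) 1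
  simpa [hshift, hc'] using hlim.const_mul ((χ c : ℂ) - 1)⁻¹

-- By van der Corput's trick `u` may be replaced by `Δ_[h] u`, which has one difference less.
theorem tendsto_cesaro_addChar_of_fwdDiff_iter_eq_const {χ : AddChar A Circle} {d : ℕ}
    (hc : ¬ IsOfFinOrder (χ c)) (hu : Δ_[1] ^[d + 1] u = fun _ => c) :
    Tendsto (cesaro fun n => (χ (u n) : ℂ)) atTop (𝓝 0) := by
  induction d generalizing u c with
  | zero =>
    exact tendsto_cesaro_addChar_of_fwdDiff_eq_const (fun h => hc (h ▸ .one)) hu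
  | succ d ih =>
    refine tendsto_cesaro_of_tendsto_cesaro_inner (fun n => (Circle.norm_coe _).le) fun h hh => ?_
    have hhc : ¬ IsOfFinOrder (χ (h • c)) := by
      rwa [χ.map_nsmul_eq_pow, isOfFinOrder_pow, not_or, and_iff_left hh.ne']
    have hlim := (Complex.continuous_re.tendsto 0).comp
      (ih hhc (fwdDiff_iter_fwdDiff_eq_const hu h))
    refine hlim.congr fun N => ?_
    simp only [inner_addChar]
    exact map_cesaro Complex.reLm (fun n => (χ (Δ_[h] u n) : ℂ)) N

end Weyl

section PowerSequences

variable {A : Type*} [AddCommGroup A]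

lemma fwdDiff_iter_pow_smul (d e : ℕ) (a : A) (n : ℕ) :
    Δ_[1] ^[d] (fun n : ℕ => n ^ e • a) n = Δ_[1] ^[d] (fun x : ℤ => x ^ e) n • a := by
  simp only [fwdDiff_iter_eq_sum_shift, Finset.sum_smul, smul_eq_mul, mul_smul]
  refine Finset.sum_congr rfl fun k _ => ?_
  rw [← natCast_zsmul a]
  push_cast
  simp

lemma fwdDiff_iter_pow_smul_eq_zero_of_lt {d e : ℕ} (h : e < d) (a : A) :
    Δ_[1] ^[d] (fun n : ℕ => n ^ e • a) = 0 := by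
  ext n
  rw [fwdDiff_iter_pow_smul, fwdDiff_iter_pow_eq_zero_of_lt h, Pi.zero_apply, zero_smul,
    Pi.zero_apply]

lemma fwdDiff_iter_pow_smul_eq_factorial (d : ℕ) (a : A) :
    Δ_[1] ^[d] (fun n : ℕ => n ^ d • a) = fun _ => d.factorial • a := by
  ext n
  rw [fwdDiff_iter_pow_smul, fwdDiff_iter_eq_factorial, Pi.natCast_apply, natCast_zsmul]

end PowerSequences

section Equidistribution

variable {X : Type*} [TopologicalSpace X] [CompactSpace X] [MeasurableSpace X]
  [OpensMeasurableSpace X] {μ : Measure X}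

lemma integrable_continuousMap [IsFiniteMeasure μ] {E : Type*} [NormedAddCommGroup E]
    [SecondCountableTopologyEither X E] (f : C(X, E)) : Integrable f μ :=
  f.continuous.integrable_of_hasCompactSupport (HasCompactSupport.of_compactSpace f)

variable [IsProbabilityMeasure μ] {x : ℕ → X} {s : Set C(X, ℂ)}

variable (μ x) in
lemma isClosed_setOf_tendsto_cesaro_integral :
    IsClosed {f : C(X, ℂ) | Tendsto (cesaro fun n => f (x n)) atTop (𝓝 (∫ y, f y ∂μ))} := by
  have hcesaro (N : ℕ) : LipschitzWith 1 fun f : C(X, ℂ) => cesaro (fun n => f (x n)) N :=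
    .of_dist_le_mul fun f g => by
      rw [dist_eq_norm, dist_eq_norm, ← cesaro_sub, NNReal.coe_one, one_mul]
      exact norm_cesaro_le (fun n => (f - g).norm_coe_le_norm (x n)) N
  have hintegral : LipschitzWith 1 fun f : C(X, ℂ) => ∫ y, f y ∂μ := .of_dist_le_mul fun f g => by
    rw [dist_eq_norm, dist_eq_norm, ← integral_sub (integrable_continuousMap f)
      (integrable_continuousMap g), NNReal.coe_one, one_mul]
    simpa using norm_integral_le_of_norm_le_const (μ := μ)
      (ae_of_all _ (f - g).norm_coe_le_norm)
  exact (LipschitzWith.uniformEquicontinuous _ 1 hcesaro).equicontinuous.isClosed_setOfPred_tendsto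
    hintegral.continuous

theorem tendsto_cesaro_integral_of_span_dense (hs : (Submodule.span ℂ s).topologicalClosure = ⊤)
    (h : ∀ f ∈ s, Tendsto (cesaro fun n => f (x n)) atTop (𝓝 (∫ y, f y ∂μ))) (f : C(X, ℂ)) :
    Tendsto (cesaro fun n => f (x n)) atTop (𝓝 (∫ y, f y ∂μ)) := by
  have hspan : (Submodule.span ℂ s : Set C(X, ℂ)) ⊆
      {f | Tendsto (cesaro fun n => f (x n)) atTop (𝓝 (∫ y, f y ∂μ))} := by
    intro f hf
    induction hf using Submodule.span_induction with
    | mem f hf => exact h f hf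
    | zero => simpa using tendsto_cesaro_const (0 : ℂ)
    | add f g _ _ hf hg =>
      have hadd := (hf.add hg).congr fun N => (cesaro_add _ _ N).symm
      rwa [← integral_add (integrable_continuousMap f) (integrable_continuousMap g)] at hadd
    | smul a f _ hf =>
      have hmul := (hf.const_mul a).congr fun N => (cesaro_const_mul a _ N).symm
      rwa [← integral_const_mul] at hmul
  have hclosure : (Submodule.span ℂ s).topologicalClosure.carrier ⊆ _ :=
    closure_minimal hspan (isClosed_setOf_tendsto_cesaro_integral μ x)
  exact hclosure (hs ▸ Submodule.mem_top)

end Equidistribution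

section Torus

instance : IsProbabilityMeasure (volume : Measure UnitAddCircle) := ⟨UnitAddCircle.measure_univ⟩

lemma integral_fourier_eq_zero {n : ℤ} (hn : n ≠ 0) : ∫ x : UnitAddCircle, fourier n x = 0 :=
  integral_eq_zero_of_add_right_eq_neg (fourier_add_half_inv_index hn one_pos)

lemma isOfFinOrder_toCircle_iff {x : UnitAddCircle} :
    IsOfFinOrder (AddCircle.toCircle_addChar x) ↔ IsOfFinAddOrder x := by
  have hinj : Function.Injective (AddCircle.toCircle_addChar (T := 1)) :=
    AddCircle.injective_toCircle one_ne_zero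
  simp only [isOfFinOrder_iff_pow_eq_one, isOfFinAddOrder_iff_nsmul_eq_zero,
    ← AddChar.map_nsmul_eq_pow, hinj.eq_iff' (AddChar.map_zero_eq_one _)]

lemma not_isOfFinAddOrder_zsmul {A : Type*} [AddGroup A] {a : A} (ha : ¬ IsOfFinAddOrder a) {m : ℤ}
    (hm : m ≠ 0) : ¬ IsOfFinAddOrder (m • a) := by
  rw [isOfFinAddOrder_iff_zsmul_eq_zero] at ha ⊢
  rintro ⟨n, hn, hna⟩
  exact ha ⟨n * m, mul_ne_zero hn hm, by rw [mul_zsmul, hna]⟩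

variable {ι : Type*}

/-- The point of the torus with coordinates `n ^ d i • α i`. -/
def powerOrbit (d : ι → ℕ) (α : UnitAddTorus ι) (n : ℕ) : UnitAddTorus ι := fun i => n ^ d i • α i

variable {d : ι → ℕ} {α : UnitAddTorus ι}

lemma powerOrbit_mul (q n : ℕ) :
    powerOrbit d α (q * n) = powerOrbit d (fun i => q ^ d i • α i) n := by
  ext i
  simp only [powerOrbit, mul_pow, mul_comm (q ^ _), mul_smul]

variable [Fintype ι]

lemma integral_mFourier_eq_zero {m : ι → ℤ} (hm : m ≠ 0) :
    ∫ y : UnitAddTorus ι, UnitAddTorus.mFourier m y = 0 := by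
  obtain ⟨i, hi⟩ := Function.ne_iff.1 hm
  refine (integral_fintype_prod_volume_eq_prod fun i (x : UnitAddCircle) => fourier (m i) x).trans
    (Finset.prod_eq_zero (Finset.mem_univ i) (integral_fourier_eq_zero hi))

lemma mFourier_eq_toCircle_sum (m : ι → ℤ) (y : UnitAddTorus ι) :
    UnitAddTorus.mFourier m y = AddCircle.toCircle_addChar (∑ i, m i • y i) := by
  have hsum := map_prod (Circle.coeHom.comp (AddCircle.toCircle_addChar (T := 1)).toMonoidHom)
    (fun i => Multiplicative.ofAdd (m i • y i)) Finset.univ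
  exact hsum.symm

lemma tendsto_cesaro_mFourier_powerOrbit (hd : d.Injective) (hd0 : ∀ i, 0 < d i)
    (hα : ∀ i, ¬ IsOfFinAddOrder (α i)) {m : ι → ℤ} (hm : m ≠ 0) :
    Tendsto (cesaro fun n => UnitAddTorus.mFourier m (powerOrbit d α n)) atTop (𝓝 0) := by
  obtain ⟨j, hj⟩ := Function.ne_iff.1 hm
  obtain ⟨i, hi, hmax⟩ := (Set.toFinite {i | m i ≠ 0}).exists_maximalFor d _ ⟨j, hj⟩
  obtain ⟨e, he⟩ := Nat.exists_eq_add_one.2 (hd0 i)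
  have hdiff : Δ_[1] ^[e + 1] (∑ i, fun n : ℕ => n ^ d i • (m i • α i))
      = fun _ => (d i).factorial • m i • α i := by
    rw [fwdDiff_iter_finsetSum, ← he, ← fwdDiff_iter_pow_smul_eq_factorial]
    refine Finset.sum_eq_single i (fun k _ hki => ?_) (by simp)
    by_cases hk : m k = 0
    · ext n
      rw [fwdDiff_iter_pow_smul, hk, zero_smul, smul_zero, Pi.zero_apply]
    · have hlt : d k < d i := (not_lt.1 fun h => h.not_ge (hmax hk h.le)).lt_of_ne (hd.ne hki)
      exact fwdDiff_iter_pow_smul_eq_zero_of_lt hlt _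
  have horder : ¬ IsOfFinOrder (AddCircle.toCircle_addChar ((d i).factorial • m i • α i)) := by
    rw [isOfFinOrder_toCircle_iff, isOfFinAddOrder_nsmul, not_or]
    exact ⟨not_isOfFinAddOrder_zsmul (hα i) hi, Nat.factorial_ne_zero _⟩
  refine (tendsto_cesaro_addChar_of_fwdDiff_iter_eq_const horder hdiff).congr fun N => ?_
  simp only [mFourier_eq_toCircle_sum, powerOrbit, Finset.sum_apply, smul_comm (m _)]

theorem tendsto_cesaro_powerOrbit (hd : d.Injective) (hd0 : ∀ i, 0 < d i)
    (hα : ∀ i, ¬ IsOfFinAddOrder (α i)) (f : C(UnitAddTorus ι, ℂ)) :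
    Tendsto (cesaro fun n => f (powerOrbit d α n)) atTop (𝓝 (∫ y, f y)) := by
  refine tendsto_cesaro_integral_of_span_dense UnitAddTorus.span_mFourier_closure_eq_top ?_ f
  rintro _ ⟨m, rfl⟩
  by_cases hm : m = 0
  · simpa [hm, UnitAddTorus.mFourier_zero] using tendsto_cesaro_const (1 : ℂ)
  · rw [integral_mFourier_eq_zero hm]
    exact tendsto_cesaro_mFourier_powerOrbit hd hd0 hα hm

end Torus

section WeightedAverages

/-- The function `x ↦ cos (2π n x)` on the circle. -/
noncomputable def cosChar (n : ℤ) : C(UnitAddCircle, ℝ) := ⟨fun x => (fourier n x).re, by fun_prop⟩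

lemma cosChar_apply (n : ℤ) (x : UnitAddCircle) : cosChar n x = (AddCircle.toCircle (n • x)).1.re :=
  rfl

lemma abs_cosChar_le_one (n : ℤ) (x : UnitAddCircle) : |cosChar n x| ≤ 1 :=
  (Complex.abs_re_le_norm _).trans (Circle.norm_coe _).le

lemma cosChar_eq_one {n : ℤ} {x : UnitAddCircle} (h : n • x = 0) : cosChar n x = 1 := by
  rw [cosChar_apply, h, AddCircle.toCircle_zero, Circle.coe_one, Complex.one_re]

lemma cosChar_add_half {n : ℤ} (hn : n ≠ 0) (x : UnitAddCircle) :
    cosChar n (x + ↑((1 : ℝ) / 2 / n)) = -cosChar n x := by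
  exact congrArg Complex.re (fourier_add_half_inv_index hn one_pos x)

variable {ι : Type*} {d : ι → ℕ} {α : UnitAddTorus ι}

lemma tendsto_cesaro_powerOrbit_real [Fintype ι] (hd : d.Injective) (hd0 : ∀ i, 0 < d i)
    (hα : ∀ i, ¬ IsOfFinAddOrder (α i)) (f : C(UnitAddTorus ι, ℝ)) :
    Tendsto (cesaro fun n => f (powerOrbit d α n)) atTop (𝓝 (∫ y, f y)) := by
  have hlim := tendsto_cesaro_powerOrbit hd hd0 hα ⟨fun y => (f y : ℂ), by fun_prop⟩
  simp only [ContinuousMap.coe_mk, integral_complex_ofReal] at hlim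
  refine ((Complex.continuous_re.tendsto _).comp hlim).congr fun N => ?_
  exact map_cesaro Complex.reLm (fun n => (f (powerOrbit d α n) : ℂ)) N

lemma tendsto_cesaro_powerOrbit_mul [Fintype ι] (hd : d.Injective) (hd0 : ∀ i, 0 < d i)
    (hα : ∀ i, ¬ IsOfFinAddOrder (α i)) {q : ℕ} (hq : 0 < q) (f : C(UnitAddTorus ι, ℝ)) :
    Tendsto (cesaro fun n => f (powerOrbit d α (q * n))) atTop (𝓝 (∫ y, f y)) := by
  simp only [powerOrbit_mul]
  refine tendsto_cesaro_powerOrbit_real hd hd0 (fun i => ?_) f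
  rw [isOfFinAddOrder_nsmul, not_or]
  exact ⟨hα i, (pow_pos hq _).ne'⟩

lemma tendsto_cesaro_mul_cosChar_of_smul_eq_zero [Fintype ι] (hd : d.Injective)
    (hd0 : ∀ i, 0 < d i) (hα : ∀ i, ¬ IsOfFinAddOrder (α i)) {q k : ℕ} (hq : 0 < q) (hk : 0 < k)
    (w : C(UnitAddTorus ι, ℝ)) {x : UnitAddCircle} (hx : q • x = 0) :
    Tendsto (cesaro fun n => w (powerOrbit d α (q * n)) * cosChar (↑(q * n) ^ k) x) atTop
      (𝓝 (∫ y, w y)) := by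
  have hcos (n : ℕ) : cosChar (↑(q * n) ^ k) x = 1 := cosChar_eq_one <| by
    obtain ⟨l, rfl⟩ := Nat.exists_eq_add_one.2 hk
    rw [← Nat.cast_pow, natCast_zsmul, pow_succ', mul_assoc, mul_comm, mul_smul, hx, smul_zero]
  simpa only [hcos, mul_one] using tendsto_cesaro_powerOrbit_mul hd hd0 hα hq w

lemma integral_mul_cosChar_eq_zero [Fintype ι] (w : C(UnitAddTorus ι, ℝ)) :
    ∫ y : UnitAddTorus (Option ι), w (fun i => y (some i)) * cosChar 1 (y none) = 0 := by
  classical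
  refine integral_eq_zero_of_add_right_eq_neg (g := Pi.single none ↑((1 : ℝ) / 2 / (1 : ℤ)))
    fun y => ?_
  simp only [Pi.add_apply, Pi.single_eq_same, cosChar_add_half one_ne_zero, mul_neg,
    Pi.single_eq_of_ne (Option.some_ne_none _), add_zero]

lemma tendsto_cesaro_mul_cosChar_of_not_isOfFinAddOrder [Finite ι] (hd : d.Injective)
    (hd0 : ∀ i, 0 < d i) (hα : ∀ i, ¬ IsOfFinAddOrder (α i)) {q k : ℕ} (hq : 0 < q) (hk : 0 < k)
    (hkd : ∀ i, d i ≠ k) (w : C(UnitAddTorus ι, ℝ)) {x : UnitAddCircle}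
    (hx : ¬ IsOfFinAddOrder x) :
    Tendsto (cesaro fun n => w (powerOrbit d α (q * n)) * cosChar (↑(q * n) ^ k) x) atTop
      (𝓝 0) := by
  cases nonempty_fintype ι
  let d' : Option ι → ℕ := fun o => o.elim k d
  let α' : UnitAddTorus (Option ι) := fun o => o.elim x α
  have hd' : d'.Injective := by
    rintro (_ | i) (_ | j) h
    exacts [rfl, (hkd j h.symm).elim, (hkd i h).elim, congrArg some (hd h)]
  have hlim := tendsto_cesaro_powerOrbit_mul (d := d') (α := α') hd' (Option.rec hk hd0)
    (Option.rec hx hα) hq ⟨fun y => w (fun i => y (some i)) * cosChar 1 (y none), by fun_prop⟩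
  simp only [ContinuousMap.coe_mk, integral_mul_cosChar_eq_zero] at hlim
  refine hlim.congr fun N => ?_
  have hcos (n : ℕ) : cosChar 1 (powerOrbit d' α' n none) = cosChar (↑n ^ k) x := by
    rw [cosChar_apply, cosChar_apply, one_smul, ← Nat.cast_pow, natCast_zsmul]
    rfl
  simp only [hcos]
  rfl

end WeightedAverages

section Recurrence

lemma neg_measureReal_le_of_integral_le {X : Type*} [MeasurableSpace X] {μ : Measure X}
    [IsFiniteMeasure μ] {F : ℕ → X → ℝ} {g : X → ℝ} {A : Set X} {u : ℕ → ℝ} {L : ℝ}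
    (hF : ∀ N, AEStronglyMeasurable (F N) μ) (hF1 : ∀ N x, ‖F N x‖ ≤ 1) (hA : MeasurableSet A)
    (hFg : ∀ x ∈ Aᶜ, Tendsto (F · x) atTop (𝓝 (g x))) (hg : ∀ x ∈ Aᶜ, 0 ≤ g x)
    (hFu : ∀ N, ∫ x, F N x ∂μ ≤ u N) (hu : Tendsto u atTop (𝓝 L)) : -μ.real A ≤ L := by
  have hlim : Tendsto (fun N => ∫ x in Aᶜ, F N x ∂μ) atTop (𝓝 (∫ x in Aᶜ, g x ∂μ)) :=
    tendsto_integral_of_dominated_convergence (fun _ => 1) (fun N => (hF N).restrict)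
      (integrable_const _) (fun N => ae_of_all _ (hF1 N))
      ((ae_restrict_iff' hA.compl).2 (ae_of_all _ hFg))
  have hle (N : ℕ) : (∫ x in Aᶜ, F N x ∂μ) - μ.real A ≤ u N := by
    have hbound : ‖∫ x in A, F N x ∂μ‖ ≤ 1 * μ.real A :=
      norm_setIntegral_le_of_norm_le_const (measure_lt_top _ _) fun x _ => hF1 N x
    have hsplit := integral_add_compl hA (.of_bound (hF N) 1 (ae_of_all μ (hF1 N)))
    linarith [neg_le_of_abs_le hbound, hFu N]
  linarith [le_of_tendsto_of_tendsto' (hlim.sub_const _) hu hle,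
    setIntegral_nonneg (μ := μ) hA.compl hg]

/-- The torsion points of the circle that multiplication by `q` does not kill. -/
def torsionNotKilledBy (q : ℕ) : Set UnitAddCircle := {x | IsOfFinAddOrder x ∧ q • x ≠ 0}

lemma measurableSet_torsionNotKilledBy (q : ℕ) : MeasurableSet (torsionNotKilledBy q) := by
  have hcountable : {x : UnitAddCircle | IsOfFinAddOrder x}.Countable := by
    refine (Set.countable_iUnion fun n : ℕ =>
      (AddCircle.finite_torsion 1 n.succ_pos).countable).mono fun x hx => ?_
    obtain ⟨n, hn, hnx⟩ := isOfFinAddOrder_iff_nsmul_eq_zero.1 hx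
    exact Set.mem_iUnion.2 ⟨n - 1, by simpa [Nat.sub_add_cancel hn] using hnx⟩
  exact (hcountable.mono fun _ hx => hx.1).measurableSet

lemma antitone_torsionNotKilledBy_factorial :
    Antitone fun m : ℕ => torsionNotKilledBy m.factorial := by
  rintro m n hmn x ⟨hx, hnx⟩
  refine ⟨hx, fun hmx => hnx ?_⟩
  obtain ⟨c, hc⟩ := Nat.factorial_dvd_factorial hmn
  rw [hc, mul_comm, mul_smul, hmx, smul_zero]

lemma iInter_torsionNotKilledBy_factorial : ⋂ m : ℕ, torsionNotKilledBy m.factorial = ∅ := by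
  refine Set.eq_empty_of_forall_notMem fun x hx => ?_
  rw [Set.mem_iInter] at hx
  obtain ⟨n, hn, hnx⟩ := isOfFinAddOrder_iff_nsmul_eq_zero.1 (hx 0).1
  obtain ⟨c, hc⟩ := Nat.dvd_factorial hn le_rfl
  exact (hx n).2 (by rw [hc, mul_comm, mul_smul, hnx, smul_zero])

variable (μ : Measure UnitAddCircle) [IsFiniteMeasure μ]

lemma tendsto_measure_torsionNotKilledBy_factorial :
    Tendsto (fun m : ℕ => μ.real (torsionNotKilledBy m.factorial)) atTop (𝓝 0) := by
  have hlim := tendsto_measure_iInter_atTop (μ := μ)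
    (fun m : ℕ => (measurableSet_torsionNotKilledBy m.factorial).nullMeasurableSet)
    antitone_torsionNotKilledBy_factorial ⟨0, measure_ne_top _ _⟩
  rw [iInter_torsionNotKilledBy_factorial, measure_empty] at hlim
  exact (ENNReal.tendsto_toReal ENNReal.zero_ne_top).comp hlim

lemma integral_cesaro {X : Type*} [MeasurableSpace X] {μ : Measure X} {u : ℕ → X → ℝ}
    (hu : ∀ n, Integrable (u n) μ) (N : ℕ) :
    ∫ x, cesaro (fun n => u n x) N ∂μ = cesaro (fun n => ∫ x, u n x ∂μ) N := by
  simp only [cesaro, integral_smul, integral_finsetSum _ fun n _ => hu (n + 1)]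

variable {ι : Type*} {d : ι → ℕ} {α : UnitAddTorus ι}

-- Along the multiples `n` of `q`, `cos (2π n ^ k x)` is `1` at the points `x` killed by `q`, while
-- at the points of infinite order it averages out to `0` whatever the weight `w`.
lemma neg_measureReal_torsionNotKilledBy_le [Fintype ι] (hd : d.Injective)
    (hd0 : ∀ i, 0 < d i) (hα : ∀ i, ¬ IsOfFinAddOrder (α i)) {q k : ℕ} (hq : 0 < q) (hk : 0 < k)
    (hkd : ∀ i, d i ≠ k) {w : C(UnitAddTorus ι, ℝ)} (hw0 : ∀ y, 0 ≤ w y) (hw1 : ∀ y, w y ≤ 1)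
    {v : ℝ} (hv : ∀ n, 0 < n → w (powerOrbit d α (q * n)) * ∫ x, cosChar (↑(q * n) ^ k) x ∂μ ≤
      w (powerOrbit d α (q * n)) * v) :
    -μ.real (torsionNotKilledBy q) ≤ v * ∫ y, w y := by
  classical
  let u (n : ℕ) : C(UnitAddCircle, ℝ) := w (powerOrbit d α (q * n)) • cosChar (↑(q * n) ^ k)
  have hu (n : ℕ) (x : UnitAddCircle) : ‖u n x‖ ≤ 1 := by
    refine (norm_mul_le _ _).trans (mul_le_one₀ ?_ (norm_nonneg _) (abs_cosChar_le_one _ x))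
    exact (Real.norm_of_nonneg (hw0 _)).trans_le (hw1 _)
  refine neg_measureReal_le_of_integral_le (F := fun N x => cesaro (fun n => u n x) N)
    (g := fun x => if q • x = 0 then ∫ y, w y else 0)
    (u := fun N => v * cesaro (fun n => w (powerOrbit d α (q * n))) N)
    (fun N => ?_) (fun N x => norm_cesaro_le (fun n => hu n x) N)
    (measurableSet_torsionNotKilledBy q) (fun x hx => ?_) (fun x _ => ?_) (fun N => ?_)
    ((tendsto_cesaro_powerOrbit_mul hd hd0 hα hq w).const_mul v)
  · exact Continuous.aestronglyMeasurable (by unfold cesaro; fun_prop)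
  · split_ifs with hqx
    · exact tendsto_cesaro_mul_cosChar_of_smul_eq_zero hd hd0 hα hq hk w hqx
    · exact tendsto_cesaro_mul_cosChar_of_not_isOfFinAddOrder hd hd0 hα hq hk hkd w
        fun h => hx ⟨h, hqx⟩
  · split_ifs
    exacts [integral_nonneg hw0, le_rfl]
  · rw [integral_cesaro (fun n => integrable_continuousMap (u n)), ← cesaro_const_mul]
    refine cesaro_mono (fun n hn => ?_) N
    simpa only [u, ContinuousMap.smul_apply, smul_eq_mul, integral_const_mul, mul_comm v]
      using hv n hn

lemma exists_bump {X : Type*} [TopologicalSpace X] [NormalSpace X] [T1Space X] {U : Set X}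
    (hU : IsOpen U) {x : X} (hx : x ∈ U) :
    ∃ w : C(X, ℝ), (∀ y, 0 ≤ w y) ∧ (∀ y, w y ≤ 1) ∧ w x = 1 ∧ ∀ y ∉ U, w y = 0 := by
  obtain ⟨w, hw0, hw1, hw⟩ := exists_continuous_zero_one_of_isClosed hU.isClosed_compl
    isClosed_singleton (Set.disjoint_singleton_right.2 fun h => h hx)
  exact ⟨w, fun y => (hw y).1, fun y => (hw y).2, hw1 rfl, fun y hy => hw0 hy⟩

theorem exists_powerOrbit_mem_and_lt_integral_cosChar [Finite ι] (hd : d.Injective)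
    (hd0 : ∀ i, 0 < d i) (hα : ∀ i, ¬ IsOfFinAddOrder (α i)) {k : ℕ} (hk : 0 < k)
    (hkd : ∀ i, d i ≠ k) {U : Set (UnitAddTorus ι)} (hU : IsOpen U) (hU0 : U.Nonempty)
    {v : ℝ} (hv : v < 0) (j : ℕ) :
    ∃ n : ℕ, j < n ∧ powerOrbit d α n ∈ U ∧ v < ∫ x, cosChar (n ^ k) x ∂μ := by
  cases nonempty_fintype ι
  obtain ⟨y, hy⟩ := hU0
  obtain ⟨w, hw0, hw1, hwy, hwU⟩ := exists_bump hU hy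
  have hw : 0 < ∫ y, w y := w.continuous.integral_pos_of_hasCompactSupport_nonneg_nonzero
    (HasCompactSupport.of_compactSpace w) hw0 (hwy.trans_ne one_ne_zero)
  by_contra! hle
  have hbound (m : ℕ) (hm : j < m) :
      -μ.real (torsionNotKilledBy m.factorial) ≤ v * ∫ y, w y := by
    refine neg_measureReal_torsionNotKilledBy_le μ hd hd0 hα m.factorial_pos hk hkd hw0 hw1
      fun n hn => ?_
    by_cases hnU : powerOrbit d α (m.factorial * n) ∈ U
    · refine mul_le_mul_of_nonneg_left (hle _ ?_ hnU) (hw0 _)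
      exact hm.trans_le (m.self_le_factorial.trans (Nat.le_mul_of_pos_right _ hn))
    · simp only [hwU _ hnU, zero_mul, le_refl]
  have hlim := (tendsto_measure_torsionNotKilledBy_factorial μ).neg
  rw [neg_zero] at hlim
  exact (mul_neg_of_neg_of_pos hv hw).not_ge
    (le_of_tendsto hlim ((eventually_gt_atTop j).mono hbound))

end Recurrence

section Duality

variable {X : Type*} [TopologicalSpace X]

lemma isOpen_setOf_forall_lt [CompactSpace X] (a : ℝ) :
    IsOpen {f : C(X, ℝ) | ∀ x, a < f x} := by
  simpa only [Set.MapsTo, Set.mem_univ, true_imp_iff, Set.mem_Ioi] using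
    ContinuousMap.isOpen_setOfPred_mapsTo (X := X) isCompact_univ (isOpen_Ioi (a := a))

lemma convex_setOf_forall_lt (a : ℝ) : Convex ℝ {f : C(X, ℝ) | ∀ x, a < f x} :=
  fun _ hf _ hg _ _ hb hc hbc x => convex_Ioi a (hf x) (hg x) hb hc hbc

lemma apply_nonpos_of_forall_lt {φ : C(X, ℝ) →ₗ[ℝ] ℝ} {a u : ℝ} (ha : a < 0)
    (hφ : ∀ f : C(X, ℝ), (∀ x, a < f x) → φ f < u) {f : C(X, ℝ)} (hf : ∀ x, 0 ≤ f x) :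
    φ f ≤ 0 := by
  by_contra! hpos
  obtain ⟨n, hn⟩ := exists_nat_gt (u / φ f)
  have hlt := hφ ((n : ℝ) • f) fun x => ha.trans_le (mul_nonneg n.cast_nonneg (hf x))
  rw [map_smul, smul_eq_mul] at hlt
  exact hlt.not_gt ((div_lt_iff₀ hpos).1 hn)

variable [CompactSpace X] [T2Space X] [MeasurableSpace X] [BorelSpace X]

lemma exists_measure_integral_eq (φ : C(X, ℝ) →ₗ[ℝ] ℝ)
    (hφ : ∀ f : C(X, ℝ), (∀ x, 0 ≤ f x) → 0 ≤ φ f) :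
    ∃ μ : Measure X, IsFiniteMeasure μ ∧ ∀ f : C(X, ℝ), ∫ x, f x ∂μ = φ f := by
  let Φ : CompactlySupportedContinuousMap X ℝ →ₚ[ℝ] ℝ := PositiveLinearMap.mk₀
    { toFun := fun f => φ f.toContinuousMap
      map_add' := fun f g => φ.map_add f.toContinuousMap g.toContinuousMap
      map_smul' := fun c f => φ.map_smul c f.toContinuousMap }
    (fun f hf => hφ _ fun x => hf x)
  refine ⟨RealRMK.rieszMeasure Φ, inferInstance, fun f => ?_⟩
  exact RealRMK.integral_rieszMeasure Φ (CompactlySupportedContinuousMap.continuousMapEquiv f)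

theorem exists_mem_convexHull_forall_lt {s : Set C(X, ℝ)}
    (h : ∀ μ : Measure X, IsFiniteMeasure μ → ∀ v < 0, ∃ f ∈ s, v < ∫ x, f x ∂μ) {a : ℝ}
    (ha : a < 0) : ∃ f ∈ convexHull ℝ s, ∀ x, a < f x := by
  by_contra! hnot
  obtain ⟨φ, u, hφ, hu⟩ := geometric_hahn_banach_open (convex_setOf_forall_lt a)
    (isOpen_setOf_forall_lt a) (convex_convexHull ℝ s) (Set.disjoint_left.2 fun f hf hfs =>
      (hnot f hfs).elim fun x hx => hx.not_gt (hf x))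
  obtain ⟨μ, hμ, hint⟩ := exists_measure_integral_eq (-φ.toLinearMap) fun f hf =>
    neg_nonneg.2 (apply_nonpos_of_forall_lt ha hφ hf)
  have hu0 : 0 < u := by simpa using hφ 0 fun _ => ha
  obtain ⟨f, hf, hlt⟩ := h μ hμ (-u) (neg_neg_iff_pos.2 hu0)
  rw [hint] at hlt
  exact (neg_lt_neg_iff.1 hlt).not_ge (hu f (subset_convexHull ℝ s hf))

end Duality

section VanDerCorputSets

/-- Van der Corput sets in the Kamae–Mendès France form: for every `δ > 0` some convex combination
of the functions `x ↦ cos (2π r x)`, `r ∈ R`, is everywhere greater than `-δ`. -/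
def IsVanDerCorput (R : Set ℤ) : Prop :=
  ∀ δ : ℝ, 0 < δ → ∃ f ∈ convexHull ℝ (cosChar '' R), ∀ x, -δ < f x

theorem isVanDerCorput_pow_image {ι : Type*} [Finite ι] {d : ι → ℕ} {α : UnitAddTorus ι}
    (hd : d.Injective) (hd0 : ∀ i, 0 < d i) (hα : ∀ i, ¬ IsOfFinAddOrder (α i)) {k : ℕ}
    (hk : 0 < k) (hkd : ∀ i, d i ≠ k) {U : Set (UnitAddTorus ι)} (hU : IsOpen U)
    (hU0 : U.Nonempty) (j : ℕ) :
    IsVanDerCorput ((fun n : ℕ => (n : ℤ) ^ k) '' {n | j < n ∧ powerOrbit d α n ∈ U}) := by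
  refine fun δ hδ => exists_mem_convexHull_forall_lt (fun μ _ v hv => ?_) (neg_neg_iff_pos.2 hδ)
  obtain ⟨n, hjn, hnU, hlt⟩ :=
    exists_powerOrbit_mem_and_lt_integral_cosChar μ hd hd0 hα hk hkd hU hU0 hv j
  exact ⟨_, ⟨_, ⟨n, ⟨hjn, hnU⟩, rfl⟩, rfl⟩, hlt⟩

end VanDerCorputSets

section FiniteAbelianGroup

variable {Γ : Type*} [AddCommGroup Γ]

lemma norm_sum_addChar_sq [Finite Γ] (A : Finset Γ) (ψ : AddChar Γ ℂ) :
    (‖∑ x ∈ A, ψ x‖ ^ 2 : ℂ) = ∑ x ∈ A, ∑ y ∈ A, ψ (x - y) := by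
  simp only [← Complex.mul_conj', map_sum, Finset.sum_mul_sum, sub_eq_add_neg,
    AddChar.map_add_eq_mul, AddChar.map_neg_eq_conj]

variable [Fintype Γ]

lemma sum_norm_sq_mul_re_addChar [DecidableEq Γ] (A : Finset Γ) (r : Γ) :
    ∑ ψ : AddChar Γ ℂ, ‖∑ x ∈ A, ψ x‖ ^ 2 * (ψ r).re =
      Fintype.card Γ * (A.filter fun x => x + r ∈ A).card := by
  have hcomplex : ∑ ψ : AddChar Γ ℂ, (‖∑ x ∈ A, ψ x‖ ^ 2 : ℂ) * ψ r =
      Fintype.card Γ * (A.filter fun x => x + r ∈ A).card := by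
    have hterm (x y : Γ) : ∑ ψ : AddChar Γ ℂ, ψ (x - y) * ψ r =
        if x + r = y then (Fintype.card Γ : ℂ) else 0 := by
      simp only [← AddChar.map_add_eq_mul, AddChar.sum_apply_eq_ite, sub_add_eq_add_sub,
        sub_eq_zero]
    simp only [norm_sum_addChar_sq, Finset.sum_mul]
    rw [Finset.sum_comm]
    simp only [Finset.sum_comm (s := Finset.univ), hterm]
    simp [Finset.sum_ite, mul_comm]
  simpa [← Complex.ofReal_pow] using congrArg Complex.re hcomplex

theorem card_mul_le_of_forall_add_notMem {ι : Type*} [Fintype ι] {a : ι → ℝ} {r : ι → Γ} {δ : ℝ}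
    (hδ : 0 ≤ δ) (h : ∀ ψ : AddChar Γ ℂ, -δ ≤ ∑ i, a i * (ψ (r i)).re) {A : Finset Γ}
    (hA : ∀ i, ∀ x ∈ A, x + r i ∉ A) : A.card * (δ + ∑ i, a i) ≤ δ * Fintype.card Γ := by
  classical
  have hnonneg (ψ : AddChar Γ ℂ) : 0 ≤ ‖∑ x ∈ A, ψ x‖ ^ 2 * (δ + ∑ i, a i * (ψ (r i)).re) :=
    mul_nonneg (sq_nonneg _) (neg_le_iff_add_nonneg'.1 (h ψ))
  have htotal : ∑ ψ : AddChar Γ ℂ, ‖∑ x ∈ A, ψ x‖ ^ 2 * (δ + ∑ i, a i * (ψ (r i)).re) =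
      δ * (Fintype.card Γ * A.card) := by
    have hzero : ∑ ψ : AddChar Γ ℂ, ‖∑ x ∈ A, ψ x‖ ^ 2 = Fintype.card Γ * A.card := by
      simpa [Finset.filter_true_of_mem] using sum_norm_sq_mul_re_addChar A 0
    have hr (i : ι) : ∑ ψ : AddChar Γ ℂ, ‖∑ x ∈ A, ψ x‖ ^ 2 * (ψ (r i)).re = 0 := by
      rw [sum_norm_sq_mul_re_addChar, Finset.filter_false_of_mem (hA i), Finset.card_empty,
        Nat.cast_zero, mul_zero]
    simp only [mul_add, Finset.sum_add_distrib, ← Finset.sum_mul, hzero, Finset.mul_sum,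
      mul_left_comm _ (a _)]
    rw [Finset.sum_comm]
    simp only [← Finset.mul_sum, hr, mul_zero, Finset.sum_const_zero, add_zero]
    ring
  -- All terms of the sum are nonnegative; the trivial character contributes the left-hand side.
  have hle : (A.card : ℝ) ^ 2 * (δ + ∑ i, a i) ≤ δ * (Fintype.card Γ * A.card) := by
    rw [← htotal]
    simpa using Finset.single_le_sum (fun ψ _ => hnonneg ψ) (Finset.mem_univ (0 : AddChar Γ ℂ))
  rcases A.eq_empty_or_nonempty with rfl | hne
  · simpa using mul_nonneg hδ (Nat.cast_nonneg _)
  · have hpos : (0 : ℝ) < A.card := by exact_mod_cast hne.card_pos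
    exact le_of_mul_le_mul_left (by linarith) hpos

end FiniteAbelianGroup

section UpperDensity

open Classical in
/-- The part `Λ ∩ {-N, …, N}` of `Λ` counted in the definition of the upper density. -/
noncomputable def window (Λ : Set ℤ) (N : ℕ) : Finset ℤ :=
  (Finset.Icc (-(N : ℤ)) N).filter (· ∈ Λ)

lemma mem_window {Λ : Set ℤ} {N : ℕ} {x : ℤ} :
    x ∈ window Λ N ↔ (-(N : ℤ) ≤ x ∧ x ≤ N) ∧ x ∈ Λ := by
  simp only [window, Finset.mem_filter, Finset.mem_Icc]

lemma upperDensity_eq_limsup_window (Λ : Set ℤ) :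
    upperDensity Λ = limsup (fun N => ((window Λ N).card : ℝ) / (2 * N + 1)) atTop :=
  rfl

lemma card_window_univ (N : ℕ) : (window Set.univ N).card = 2 * N + 1 := by
  simp only [window, Set.mem_univ, Finset.filter_true, Int.card_Icc]
  omega

lemma card_window_div_le_one (Λ : Set ℤ) (N : ℕ) :
    ((window Λ N).card : ℝ) / (2 * N + 1) ≤ 1 := by
  have hsub : window Λ N ⊆ window Set.univ N := fun x hx =>
    mem_window.2 ⟨(mem_window.1 hx).1, trivial⟩
  rw [div_le_one (by positivity)]
  exact_mod_cast card_window_univ N ▸ Finset.card_le_card hsub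

lemma upperDensity_le_of_tendsto {Λ : Set ℤ} {b : ℕ → ℝ} {L : ℝ}
    (hb : ∀ N, ((window Λ N).card : ℝ) / (2 * N + 1) ≤ b N) (hL : Tendsto b atTop (𝓝 L)) :
    upperDensity Λ ≤ L := by
  rw [upperDensity_eq_limsup_window, ← hL.limsup_eq]
  exact limsup_le_limsup (.of_forall hb)
    (isBoundedUnder_of ⟨0, fun N => by positivity⟩ : IsBoundedUnder (· ≥ ·) _ _).isCoboundedUnder_le
    hL.isBoundedUnder_le

theorem exists_fiber_upperDensity_pos {κ : Type*} [Finite κ] (c : ℤ → κ) :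
    ∃ i, 0 < upperDensity (c ⁻¹' {i}) := by
  classical
  cases nonempty_fintype κ
  by_contra! hnot
  have hsmall (i : κ) : ∀ᶠ N : ℕ in atTop,
      ((window (c ⁻¹' {i}) N).card : ℝ) / (2 * N + 1) < 1 / (Fintype.card κ + 1) :=
    eventually_lt_of_limsup_lt ((hnot i).trans_lt (by positivity))
      (isBoundedUnder_of ⟨1, card_window_div_le_one _⟩)
  obtain ⟨N, hN⟩ := (eventually_all.2 hsmall).exists
  have hsum : ∑ i, ((window (c ⁻¹' {i}) N).card : ℝ) / (2 * N + 1) = 1 := by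
    have hcard := Finset.card_eq_sum_card_fiberwise (f := c) (s := window Set.univ N)
      (t := Finset.univ) fun x _ => Finset.mem_coe.2 (Finset.mem_univ _)
    have hfiber (i : κ) : (window Set.univ N).filter (c · = i) = window (c ⁻¹' {i}) N := by
      ext x; simp [mem_window]
    simp only [hfiber, card_window_univ] at hcard
    rw [← Finset.sum_div, div_eq_one_iff_eq (by positivity)]
    exact_mod_cast hcard.symm
  have hlt : ∑ i, ((window (c ⁻¹' {i}) N).card : ℝ) / (2 * N + 1) < 1 :=
    calc _ ≤ ∑ _i : κ, (1 : ℝ) / (Fintype.card κ + 1) := Finset.sum_le_sum fun i _ => (hN i).le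
      _ = Fintype.card κ / (Fintype.card κ + 1) := by simp [div_eq_mul_inv]
      _ < 1 := (div_lt_one (by positivity)).2 (lt_add_one _)
  exact hlt.ne hsum

end UpperDensity

section Intersectivity

lemma exists_cosChar_eq_re_addChar {Γ : Type*} [AddCommGroup Γ] [Finite Γ] (ψ : AddChar Γ ℂ)
    (g : Γ) : ∃ x, ∀ n : ℤ, (ψ (n • g)).re = cosChar n x := by
  obtain ⟨z, hz⟩ : ∃ z : Circle, (z : ℂ) = ψ g :=
    ⟨⟨ψ g, mem_sphere_zero_iff_norm.2 (ψ.norm_apply g)⟩, rfl⟩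
  obtain ⟨x, rfl⟩ := (AddCircle.homeomorphCircle (one_ne_zero (α := ℝ))).surjective z
  refine ⟨x, fun n => ?_⟩
  rw [cosChar_apply, AddCircle.toCircle_zsmul, Circle.coe_zpow, AddChar.map_zsmul_eq_zpow, ← hz,
    AddCircle.homeomorphCircle_apply]

lemma eq_of_intCast_zmod_eq {M : ℕ} {x y : ℤ} (h : (x : ZMod M) = y) (hlt : |y - x| < M) :
    x = y :=
  (sub_eq_zero.1 (Int.eq_zero_of_abs_lt_dvd ((ZMod.intCast_eq_intCast_iff_dvd_sub x y M).1 h)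
    hlt)).symm

lemma card_window_le {ι : Type*} [Fintype ι] {a : ι → ℝ} {r : ι → ℤ} {δ : ℝ} (hδ : 0 ≤ δ)
    (h : ∀ x, -δ ≤ ∑ i, a i * cosChar (r i) x) {D : ℕ} (hD : ∀ i, |r i| ≤ D)
    {Λ : Set ℤ} (hΛ : ∀ i, ∀ m ∈ Λ, m + r i ∉ Λ) (N : ℕ) :
    (window Λ N).card * (δ + ∑ i, a i) ≤ δ * (2 * N + 1 + D) := by
  classical
  let A := (window Λ N).image (Int.cast : ℤ → ZMod (2 * N + 1 + D))
  have hcard : A.card = (window Λ N).card := by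
    refine Finset.card_image_of_injOn fun x hx y hy hxy => eq_of_intCast_zmod_eq hxy ?_
    have := mem_window.1 hx
    have := mem_window.1 hy
    rw [abs_lt]
    omega
  have hA (i : ι) : ∀ x ∈ A, x + r i ∉ A := by
    intro x hx hxr
    obtain ⟨m, hm, rfl⟩ := Finset.mem_image.1 hx
    obtain ⟨m', hm', heq⟩ := Finset.mem_image.1 hxr
    have hmΛ := mem_window.1 hm
    have hmΛ' := mem_window.1 hm'
    have hri := abs_le.1 (hD i)
    rw [← Int.cast_add] at heq
    obtain rfl := eq_of_intCast_zmod_eq heq (by rw [abs_lt]; omega)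
    exact hΛ i m hmΛ.2 hmΛ'.2
  have hψ (ψ : AddChar (ZMod (2 * N + 1 + D)) ℂ) : -δ ≤ ∑ i, a i * (ψ (r i : ZMod _)).re := by
    obtain ⟨x, hx⟩ := exists_cosChar_eq_re_addChar ψ 1
    simpa [← hx] using h x
  simpa [hcard] using card_mul_le_of_forall_add_notMem hδ hψ hA

lemma upperDensity_le_of_forall_add_notMem {ι : Type*} [Fintype ι] {a : ι → ℝ} {r : ι → ℤ}
    {δ : ℝ} (ha : ∑ i, a i = 1) (hδ : 0 ≤ δ) (h : ∀ x, -δ ≤ ∑ i, a i * cosChar (r i) x)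
    {Λ : Set ℤ} (hΛ : ∀ i, ∀ m ∈ Λ, m + r i ∉ Λ) : upperDensity Λ ≤ δ := by
  obtain ⟨D, hD⟩ : ∃ D : ℕ, ∀ i, |r i| ≤ D := by
    obtain ⟨D, hD⟩ := (Set.finite_range fun i => |r i|).bddAbove
    exact ⟨D.toNat, fun i => (hD ⟨i, rfl⟩).trans D.self_le_toNat⟩
  refine upperDensity_le_of_tendsto (b := fun N => δ + δ * D / (2 * N + 1)) (fun N => ?_) ?_
  · have hle := card_window_le hδ h hD hΛ N
    rw [ha] at hle
    have hcard : ((window Λ N).card : ℝ) ≤ δ * (2 * N + 1 + D) :=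
      (le_mul_of_one_le_right (Nat.cast_nonneg _) (le_add_of_nonneg_left hδ)).trans hle
    calc ((window Λ N).card : ℝ) / (2 * N + 1)
        ≤ δ * (2 * N + 1 + D) / (2 * N + 1) := by gcongr
      _ = δ + δ * D / (2 * N + 1) := by field_simp
  · have hN : Tendsto (fun N : ℕ => 2 * (N : ℝ) + 1) atTop atTop :=
      tendsto_atTop_add_const_right _ _ (tendsto_natCast_atTop_atTop.const_mul_atTop two_pos)
    simpa using (hN.const_div_atTop (δ * D)).const_add δ

theorem IsVanDerCorput.exists_finset {R : Set ℤ} (hR : IsVanDerCorput R) {δ : ℝ} (hδ : 0 < δ) :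
    ∃ F : Finset ℤ, ↑F ⊆ R ∧
      ∀ Λ : Set ℤ, δ < upperDensity Λ → ∃ r ∈ F, ∃ m ∈ Λ, m + r ∈ Λ := by
  classical
  obtain ⟨f, hf, hlt⟩ := hR δ hδ
  obtain ⟨ι, _, a, z, -, ha, hz, rfl⟩ := mem_convexHull_iff_exists_fintype.1 hf
  choose r hrR hr using hz
  refine ⟨Finset.univ.image r, by simpa [Set.range_subset_iff] using hrR, fun Λ hΛ => ?_⟩
  by_contra! hnot
  refine hΛ.not_ge (upperDensity_le_of_forall_add_notMem ha hδ.le (fun x => ?_) fun i =>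
    hnot _ (Finset.mem_image_of_mem r (Finset.mem_univ i)))
  simpa [hr] using (hlt x).le

end Intersectivity

-- Colour `n` by a small ball containing `n • α` and by its residue modulo a large number: the first
-- colour excludes the differences `s` with `s • α` far from `0`, the second the remaining ones.
theorem not_intersective_of_finite {E : Type*} [SeminormedAddCommGroup E] [CompactSpace E] (α : E)
    {S : Set ℤ} {ε : ℝ} (hε : 0 < ε) (hS : {s ∈ S | ‖s • α‖ < ε}.Finite) : ¬ Intersective S := by
  obtain ⟨t, -, ht, hcover⟩ :=
    finite_cover_balls_of_compact (isCompact_univ (X := E)) (half_pos hε)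
  have hball (n : ℤ) : ∃ y : t, n • α ∈ Metric.ball (y : E) (ε / 2) := by
    simpa using hcover (Set.mem_univ (n • α))
  choose c hc using hball
  obtain ⟨L, hL⟩ : ∃ L : ℕ, ∀ s ∈ S, ‖s • α‖ < ε → |s| ≤ L := by
    obtain ⟨L, hL⟩ := (hS.image (|·|)).bddAbove
    exact ⟨L.toNat, fun s hs hsα => (hL ⟨s, ⟨hs, hsα⟩, rfl⟩).trans L.self_le_toNat⟩
  have := ht.to_subtype
  obtain ⟨i, hi⟩ := exists_fiber_upperDensity_pos fun n : ℤ => (c n, (n : ZMod (L + 1)))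
  intro hinter
  obtain ⟨s, hs, hs0, m, hm, hms⟩ := hinter _ hi
  obtain ⟨hcolor, hresidue⟩ := Prod.mk.inj (hms.trans hm.symm)
  have hsmall : ‖s • α‖ < ε := by
    rw [← add_sub_cancel_left (m • α) (s • α), ← add_zsmul, ← dist_eq_norm, ← add_halves ε]
    exact (dist_triangle_right _ _ (c m : E)).trans_lt (add_lt_add (hcolor ▸ hc (m + s)) (hc m))
  have hlt : |m - (m + s)| < ↑(L + 1) := by
    have := hL s hs hsmall
    rw [sub_add_cancel_left, abs_neg]
    omega
  exact hs0 (by simpa using eq_of_intCast_zmod_eq hresidue hlt)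

lemma not_intersective_pow_image_of_finite {E : Type*} [SeminormedAddCommGroup E] [CompactSpace E]
    {α : E} {R : Set ℕ} {k : ℕ} {ε : ℝ} (hε : 0 < ε) (hR : {n ∈ R | ‖n ^ k • α‖ < ε}.Finite) :
    ¬ Intersective ((fun n : ℕ => (n : ℤ) ^ k) '' R) := by
  refine not_intersective_of_finite α hε ((hR.image fun n : ℕ => (n : ℤ) ^ k).subset ?_)
  rintro _ ⟨⟨n, hn, rfl⟩, hnα⟩
  exact ⟨n, ⟨hn, by simpa only [← Nat.cast_pow, natCast_zsmul] using hnα⟩, rfl⟩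

section FarTimes

/-- The times `n > j` at which `n ^ b • α` is far from `0` for all exponents `b ∈ B`. -/
def farTimes (α : UnitAddCircle) (B : Finset ℕ) (j : ℕ) : Set ℕ :=
  {n | j < n ∧ ∀ b ∈ B, 1 / 4 < ‖n ^ b • α‖}

variable {α : UnitAddCircle} {B K : Finset ℕ}

theorem isVanDerCorput_pow_image_farTimes (hα : ¬ IsOfFinAddOrder α) (hB : ∀ b ∈ B, 0 < b) {k : ℕ}
    (hk : 0 < k) (hkB : k ∉ B) (j : ℕ) :
    IsVanDerCorput ((fun n : ℕ => (n : ℤ) ^ k) '' farTimes α B j) := by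
  let U : Set (UnitAddTorus B) := {y | ∀ b, 1 / 4 < ‖y b‖}
  have hU : IsOpen U := by
    simp only [U, Set.ofPred_forall]
    exact isOpen_iInter_of_finite fun b => isOpen_lt continuous_const (by fun_prop)
  have hU0 : U.Nonempty := by
    refine ⟨fun _ => ((1 / 2 : ℝ) : UnitAddCircle), fun _ => ?_⟩
    rw [AddCircle.norm_half_period_eq]
    norm_num
  simpa [U, farTimes, powerOrbit] using isVanDerCorput_pow_image (d := ((↑) : B → ℕ))
    (α := fun _ => α) Subtype.val_injective (fun b => hB b b.2) (fun _ => hα) hk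
    (fun b h => hkB (h ▸ b.2)) hU hU0 j

lemma IsVanDerCorput.nonempty {R : Set ℤ} (hR : IsVanDerCorput R) : R.Nonempty := by
  obtain ⟨f, hf, -⟩ := hR 1 one_pos
  exact (convexHull_nonempty_iff.1 ⟨f, hf⟩).of_image

lemma exists_finset_subset_farTimes (hα : ¬ IsOfFinAddOrder α) (hB : ∀ b ∈ B, 0 < b) {k : ℕ}
    (hk : 0 < k) (hkB : k ∉ B) (j : ℕ) {δ : ℝ} (hδ : 0 < δ) :
    ∃ F : Finset ℕ, ↑F ⊆ farTimes α B j ∧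
      ∀ Λ : Set ℤ, δ < upperDensity Λ → ∃ n ∈ F, ∃ m ∈ Λ, m + (n : ℤ) ^ k ∈ Λ := by
  classical
  obtain ⟨F', hF', hdiff⟩ :=
    (isVanDerCorput_pow_image_farTimes hα hB hk hkB j).exists_finset hδ
  obtain ⟨F, hF, rfl⟩ := Finset.subset_set_image_iff.1 hF'
  exact ⟨F, hF, fun Λ hΛ => by simpa using hdiff Λ hΛ⟩

lemma farTimes_nonempty (hα : ¬ IsOfFinAddOrder α) (hB : ∀ b ∈ B, 0 < b) (j : ℕ) :
    (farTimes α B j).Nonempty := by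
  obtain ⟨k, hk⟩ := (insert 0 B).exists_notMem
  rw [Finset.mem_insert, not_or] at hk
  exact (isVanDerCorput_pow_image_farTimes hα hB (Nat.pos_of_ne_zero hk.1) hk.2 j).nonempty.of_image

theorem exists_nonempty_finset_subset_farTimes (hα : ¬ IsOfFinAddOrder α) (hB : ∀ b ∈ B, 0 < b)
    (hK : ∀ k ∈ K, 0 < k) (hKB : Disjoint K B) (j : ℕ) {δ : ℝ} (hδ : 0 < δ) :
    ∃ F : Finset ℕ, F.Nonempty ∧ ↑F ⊆ farTimes α B j ∧
      ∀ k ∈ K, ∀ Λ : Set ℤ, δ < upperDensity Λ → ∃ n ∈ F, ∃ m ∈ Λ, m + (n : ℤ) ^ k ∈ Λ := by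
  classical
  obtain ⟨n₀, hn₀⟩ := farTimes_nonempty hα hB j
  choose! F hF hdiff using fun k hk =>
    exists_finset_subset_farTimes hα hB (hK k hk) (Finset.disjoint_left.1 hKB hk) j hδ
  refine ⟨insert n₀ (K.biUnion F), Finset.insert_nonempty _ _, ?_, fun k hk Λ hΛ => ?_⟩
  · simpa [Set.insert_subset_iff, hn₀] using hF
  · obtain ⟨n, hn, hm⟩ := hdiff k hk Λ hΛ
    exact ⟨n, Finset.mem_insert_of_mem (Finset.mem_biUnion.2 ⟨k, hk, hn⟩), hm⟩

theorem exists_finset_blocks (hα : ¬ IsOfFinAddOrder α) (G : Set ℕ) :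
    ∃ F : ℕ → Finset ℕ, (∀ j, (F j).Nonempty) ∧ (∀ j, ∀ n ∈ F j, j < n) ∧
      (∀ k, 0 < k → k ∉ G → ∀ j, k ≤ j → ∀ n ∈ F j, 1 / 4 < ‖n ^ k • α‖) ∧
      ∀ k, 0 < k → k ∈ G → ∀ j, k ≤ j → ∀ Λ : Set ℤ, 1 / ((j : ℝ) + 1) < upperDensity Λ →
        ∃ n ∈ F j, ∃ m ∈ Λ, m + (n : ℤ) ^ k ∈ Λ := by
  classical
  let I (S : Set ℕ) (j : ℕ) : Finset ℕ := (Finset.Icc 1 j).filter (· ∈ S)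
  have hI {S : Set ℕ} {j k : ℕ} : k ∈ I S j ↔ (0 < k ∧ k ≤ j) ∧ k ∈ S := by
    simp [I, Nat.one_le_iff_ne_zero, Nat.pos_iff_ne_zero]
  have hdisj (j : ℕ) : Disjoint (I G j) (I Gᶜ j) :=
    Finset.disjoint_left.2 fun _ hk hk' => (hI.1 hk').2 (hI.1 hk).2
  choose F hF0 hFfar hFdiff using fun j : ℕ => exists_nonempty_finset_subset_farTimes hα
    (fun _ hb => (hI.1 hb).1.1) (fun _ hk => (hI.1 hk).1.1) (hdisj j) j
    (Nat.one_div_pos_of_nat (α := ℝ) (n := j))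
  exact ⟨F, hF0, fun j n hn => (hFfar j hn).1,
    fun k hk hkG j hkj n hn => (hFfar j hn).2 k (hI.2 ⟨⟨hk, hkj⟩, hkG⟩),
    fun k hk hkG j hkj => hFdiff j k (hI.2 ⟨⟨hk, hkj⟩, hkG⟩)⟩

end FarTimes

lemma not_isOfFinAddOrder_sqrt_two : ¬ IsOfFinAddOrder ((√2 : ℝ) : UnitAddCircle) := by
  rw [AddCircle.not_isOfFinAddOrder_iff_forall_rat_ne_div]
  exact fun q hq => irrational_sqrt_two ⟨q, by simpa using hq⟩

theorem statement0 (G : Set ℕ) (hG : ∀ g ∈ G, 0 < g) :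
    ∃ R : Set ℕ, R.Infinite ∧ (∀ r ∈ R, 0 < r) ∧
      ∀ k : ℕ, 0 < k → (Intersective ((fun r : ℕ => (r : ℤ) ^ k) '' R) ↔ k ∈ G) := by
  obtain ⟨F, hF0, hFlt, hFfar, hFdiff⟩ := exists_finset_blocks not_isOfFinAddOrder_sqrt_two G
  refine ⟨⋃ j, F j, Set.infinite_of_forall_exists_gt fun j => ?_, fun n hn => ?_,
    fun k hk => ⟨not_imp_not.1 fun hkG => ?_, fun hkG Λ hΛ => ?_⟩⟩
  · obtain ⟨n, hn⟩ := hF0 j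
    exact ⟨n, Set.mem_iUnion.2 ⟨j, hn⟩, hFlt j n hn⟩
  · obtain ⟨j, hj⟩ := Set.mem_iUnion.1 hn
    exact (hFlt j n hj).pos
  · have hfin : (⋃ j ∈ {j | j < k}, (F j : Set ℕ)).Finite :=
      (Set.finite_lt_nat k).biUnion fun j _ => (F j).finite_toSet
    refine not_intersective_pow_image_of_finite (α := ((√2 : ℝ) : UnitAddCircle))
      (by norm_num : (0 : ℝ) < 1 / 4) (hfin.subset fun n hn => ?_)
    obtain ⟨j, hj⟩ := Set.mem_iUnion.1 hn.1
    have hjk : j < k := lt_of_not_ge fun hkj => hn.2.not_gt (hFfar k hk hkG j hkj n hj)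
    exact Set.mem_biUnion hjk hj
  · obtain ⟨j, hjΛ, hkj⟩ := ((tendsto_one_div_add_atTop_nhds_zero_nat.eventually
      (gt_mem_nhds hΛ)).and (eventually_ge_atTop k)).exists
    obtain ⟨n, hn, hm⟩ := hFdiff k hk hkG j hkj Λ hjΛ
    have hn0 : (n : ℤ) ≠ 0 := Nat.cast_ne_zero.2 (hFlt j n hn).ne_bot
    exact ⟨_, ⟨n, Set.mem_iUnion.2 ⟨j, hn⟩, rfl⟩, pow_ne_zero k hn0, hm⟩
end

section
/- Let G be an arbitrary set of positive integers. Then there exists an infinite set R = {r₁, r₂, …} of positive integers such that for every positive integer k, the set R^k = {r₁^k, r₂^k, …} of k-th powers of elements of R is a set of recurrence if and only if k ∈ G. -/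
open Filter MeasureTheory

/-- A set `R` of integers is a set of `ℓ`-recurrence if for every invertible measure
preserving system `(X, ℬ, μ, T)` and every measurable set `A` with `μ(A) > 0` there is a
nonzero `r ∈ R` with `μ(A ∩ T^{-r}A ∩ T^{-2r}A ∩ … ∩ T^{-ℓr}A) > 0`. -/
def IsSetOfMultRecurrence (ℓ : ℕ) (R : Set ℤ) : Prop :=
  ∀ (X : Type) (_ : MeasurableSpace X) (μ : Measure X),
    IsProbabilityMeasure μ →
    ∀ T : X ≃ᵐ X, MeasurePreserving (⇑T) μ μ →
    ∀ A : Set X, MeasurableSet A → 0 < μ A →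
      ∃ r ∈ R, r ≠ 0 ∧
        0 < μ (⋂ i ∈ Finset.range (ℓ + 1), (⇑(T.toEquiv ^ ((i : ℤ) * r))) ⁻¹' A)

/-!
Call `S ⊆ ℤ` van der Corput up to `ε` if every probability measure `σ` on the circle satisfies
`∫ cos (2π m x) dσ(x) > -ε` for some `m ∈ S`. Since the space of probability measures is compact, a
finite subset of `S` already has this property. By the Herglotz theorem, applied to the sequence
`μ (A ∩ T⁻ᵐ A) - μ(A)²`, a set of nonzero integers with this property for every `ε > 0` is a set of
recurrence.

Let `α` be irrational, `E` a finite set of positive integers and `k > 0` outside `E`. The `k`-th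
powers of the integers `r` for which every `α r ^ j`, `j ∈ E`, is more than `1 / 4` away from `ℤ`
are van der Corput up to every `ε`. To see this, restrict to multiples `r` of a highly divisible
`M`: the torsion points of the circle then contribute almost nonnegatively to
`∫ cos (2π r ^ k x) dσ(x)`, while at any other `x` the phase `r ^ k x` is independent of the phases
`α r ^ j` by Weyl equidistribution, so the contribution averages to zero over the `r` in question.

For each `n` take a finite set of such `r > n` that works for `E = {1, …, n} \ G`, all `k ≤ n + 1`
outside `E` and `ε = 1 / (n + 1)`. The `k`-th powers of the union `R` of these sets are van der
Corput up to every `ε` for `k ∈ G`. If `j ∉ G`, then `α r ^ j` is more than `1 / 4` away from `ℤ`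
for all but finitely many `r ∈ R`, and it is never an integer, so the rotation by `α` shows that the
`j`-th powers of `R` are not a set of recurrence.
-/

open scoped Topology RealInnerProductSpace ComplexConjugate Polynomial FourierTransform

namespace PowerRecurrence

section CesaroMean

variable {E F : Type*} [NormedAddCommGroup E] [NormedSpace ℝ E] [NormedAddCommGroup F]
  [NormedSpace ℝ F] {u v : ℕ → E} {a b : E} {C : ℝ}

/-- The average of the first `N` terms of a sequence, with value `0` at `N = 0`. -/
noncomputable def cesaroAverage (u : ℕ → E) (N : ℕ) : E :=
  (N : ℝ)⁻¹ • ∑ n ∈ Finset.range N, u n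

/-- Convergence of a sequence to `a` in the sense of Cesàro. -/
def HasCesaroMean (u : ℕ → E) (a : E) : Prop :=
  Tendsto (cesaroAverage u) atTop (𝓝 a)

lemma cesaroAverage_add (u v : ℕ → E) (N : ℕ) :
    cesaroAverage (fun n ↦ u n + v n) N = cesaroAverage u N + cesaroAverage v N := by
  rw [cesaroAverage, Finset.sum_add_distrib, smul_add, cesaroAverage, cesaroAverage]

lemma cesaroAverage_sub (u v : ℕ → E) (N : ℕ) :
    cesaroAverage (fun n ↦ u n - v n) N = cesaroAverage u N - cesaroAverage v N := by
  rw [cesaroAverage, Finset.sum_sub_distrib, smul_sub, cesaroAverage, cesaroAverage]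

lemma map_cesaroAverage (L : E →L[ℝ] F) (u : ℕ → E) (N : ℕ) :
    L (cesaroAverage u N) = cesaroAverage (fun n ↦ L (u n)) N := by
  simp only [cesaroAverage, map_smul, map_sum]

lemma norm_cesaroAverage_le_cesaroAverage_norm (u : ℕ → E) (N : ℕ) :
    ‖cesaroAverage u N‖ ≤ cesaroAverage (fun n ↦ ‖u n‖) N := by
  rw [cesaroAverage, norm_smul, Real.norm_of_nonneg (by positivity), cesaroAverage, smul_eq_mul]
  gcongr
  exact norm_sum_le _ _

lemma cesaroAverage_mono {u v : ℕ → ℝ} (h : ∀ n, u n ≤ v n) (N : ℕ) :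
    cesaroAverage u N ≤ cesaroAverage v N := by
  simp only [cesaroAverage, smul_eq_mul]
  gcongr
  exact h _

lemma cesaroAverage_const {N : ℕ} (hN : N ≠ 0) (a : E) : cesaroAverage (fun _ ↦ a) N = a := by
  rw [cesaroAverage, Finset.sum_const, Finset.card_range, ← Nat.cast_smul_eq_nsmul ℝ,
    inv_smul_smul₀ (Nat.cast_ne_zero.2 hN)]

lemma norm_cesaroAverage_le (hu : ∀ n, ‖u n‖ ≤ C) (N : ℕ) : ‖cesaroAverage u N‖ ≤ C := by
  rcases eq_or_ne N 0 with rfl | hN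
  · simpa [cesaroAverage] using (norm_nonneg _).trans (hu 0)
  · exact (norm_cesaroAverage_le_cesaroAverage_norm u N).trans
      ((cesaroAverage_mono hu N).trans_eq (cesaroAverage_const hN C))

lemma norm_cesaroAverage_sq_le (u : ℕ → E) (N : ℕ) :
    ‖cesaroAverage u N‖ ^ 2 ≤ cesaroAverage (fun n ↦ ‖u n‖ ^ 2) N := by
  rcases eq_or_ne N 0 with rfl | hN
  · simp [cesaroAverage]
  have jensen : (∑ n ∈ Finset.range N, ‖u n‖) ^ 2 ≤ N * ∑ n ∈ Finset.range N, ‖u n‖ ^ 2 := by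
    simpa using sq_sum_le_card_mul_sum_sq (s := Finset.range N) (f := fun n ↦ ‖u n‖)
  calc ‖cesaroAverage u N‖ ^ 2 ≤ (cesaroAverage (fun n ↦ ‖u n‖) N) ^ 2 := by
        gcongr; exact norm_cesaroAverage_le_cesaroAverage_norm u N
    _ = ((N : ℝ)⁻¹) ^ 2 * (∑ n ∈ Finset.range N, ‖u n‖) ^ 2 := by
        rw [cesaroAverage, smul_eq_mul, mul_pow]
    _ ≤ ((N : ℝ)⁻¹) ^ 2 * (N * ∑ n ∈ Finset.range N, ‖u n‖ ^ 2) := by gcongr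
    _ = cesaroAverage (fun n ↦ ‖u n‖ ^ 2) N := by
        rw [cesaroAverage, smul_eq_mul]; field_simp

namespace HasCesaroMean

lemma const (a : E) : HasCesaroMean (fun _ ↦ a) a :=
  tendsto_const_nhds.congr' <| (eventually_ne_atTop 0).mono fun _ hN ↦
    (cesaroAverage_const hN a).symm

lemma add (hu : HasCesaroMean u a) (hv : HasCesaroMean v b) :
    HasCesaroMean (fun n ↦ u n + v n) (a + b) := by
  simpa only [HasCesaroMean, funext (cesaroAverage_add u v)] using Tendsto.add hu hv

lemma map (L : E →L[ℝ] F) (hu : HasCesaroMean u a) : HasCesaroMean (fun n ↦ L (u n)) (L a) :=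
  ((L.continuous.tendsto a).comp hu).congr (map_cesaroAverage L u)

lemma const_smul (c : ℝ) (hu : HasCesaroMean u a) : HasCesaroMean (fun n ↦ c • u n) (c • a) :=
  hu.map (c • ContinuousLinearMap.id ℝ E)

lemma const_mul {u : ℕ → ℂ} {a : ℂ} (c : ℂ) (hu : HasCesaroMean u a) :
    HasCesaroMean (fun n ↦ c * u n) (c * a) :=
  hu.map (ContinuousLinearMap.mul ℝ ℂ c)

lemma sum {ι : Type*} {s : Finset ι} {u : ι → ℕ → E} {a : ι → E}
    (hu : ∀ i ∈ s, HasCesaroMean (u i) (a i)) :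
    HasCesaroMean (fun n ↦ ∑ i ∈ s, u i n) (∑ i ∈ s, a i) := by
  classical
  induction s using Finset.induction_on with
  | empty => simpa using const (0 : E)
  | insert i s hi ih =>
    simp only [Finset.sum_insert hi]
    exact (hu i (Finset.mem_insert_self i s)).add
      (ih fun j hj ↦ hu j (Finset.mem_insert_of_mem hj))

end HasCesaroMean

lemma hasCesaroMean_zero_of_norm_sum_le
    (hu : ∀ N, ‖∑ n ∈ Finset.range N, u n‖ ≤ C) : HasCesaroMean u 0 := by
  refine squeeze_zero_norm (a := fun N : ℕ ↦ (N : ℝ)⁻¹ * C) (fun N ↦ ?_) ?_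
  · rw [cesaroAverage, norm_smul, Real.norm_of_nonneg (by positivity)]
    gcongr
    exact hu N
  · simpa using (tendsto_inv_atTop_nhds_zero_nat (𝕜 := ℝ)).mul_const C

lemma hasCesaroMean_shift_sub (hu : ∀ n, ‖u n‖ ≤ C) (h : ℕ) :
    HasCesaroMean (fun n ↦ u (n + h) - u n) 0 := by
  refine hasCesaroMean_zero_of_norm_sum_le (C := h * C + h * C) fun N ↦ ?_
  have telescope : ∑ n ∈ Finset.range N, (u (n + h) - u n)
      = ∑ n ∈ Finset.range h, u (N + n) - ∑ n ∈ Finset.range h, u n := by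
    simp only [Finset.sum_sub_distrib, add_comm _ h]
    rw [sub_eq_sub_iff_add_eq_add, add_comm, ← Finset.sum_range_add u h N, add_comm h N,
      Finset.sum_range_add, add_comm]
  have bound (w : ℕ → ℕ) : ‖∑ n ∈ Finset.range h, u (w n)‖ ≤ h * C := by
    simpa using norm_sum_le_of_le (Finset.range h) fun n _ ↦ hu (w n)
  rw [telescope]
  exact (norm_sub_le _ _).trans (add_le_add (bound _) (bound _))

lemma hasCesaroMean_zero_of_shift_eq_mul {u : ℕ → ℂ} (hu : ∀ n, ‖u n‖ ≤ C) {h : ℕ} {ω : ℂ}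
    (hω : ω ≠ 1) (hshift : ∀ n, u (n + h) = ω * u n) : HasCesaroMean u 0 := by
  have := (hasCesaroMean_shift_sub hu h).const_mul (ω - 1)⁻¹
  simpa only [hshift, ← sub_one_mul, inv_mul_cancel_left₀ (sub_ne_zero.2 hω), mul_zero] using this

lemma hasCesaroMean_sub_cesaroAverage_shift (hu : ∀ n, ‖u n‖ ≤ C) {H : ℕ} (hH : H ≠ 0) :
    HasCesaroMean (fun n ↦ cesaroAverage (fun h ↦ u (n + h)) H - u n) 0 := by
  have key := (HasCesaroMean.sum (s := Finset.range H)
    fun h _ ↦ hasCesaroMean_shift_sub hu h).const_smul (H : ℝ)⁻¹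
  have (n : ℕ) : cesaroAverage (fun h ↦ u (n + h)) H - u n
      = (H : ℝ)⁻¹ • ∑ h ∈ Finset.range H, (u (n + h) - u n) := by
    rw [← cesaroAverage, cesaroAverage_sub, cesaroAverage_const hH]
  simpa only [this, Finset.sum_const_zero, smul_zero] using key

lemma HasCesaroMean.integral {X : Type*} [MeasurableSpace X] {μ : Measure X} [IsFiniteMeasure μ]
    {g : ℕ → X → E} {G : X → E} (hg : ∀ n, AEStronglyMeasurable (g n) μ)
    (hC : ∀ n x, ‖g n x‖ ≤ C) (hlim : ∀ᵐ x ∂μ, HasCesaroMean (fun n ↦ g n x) (G x)) :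
    HasCesaroMean (fun n ↦ ∫ x, g n x ∂μ) (∫ x, G x ∂μ) := by
  have hint (n : ℕ) : Integrable (g n) μ := .of_bound (hg n) C (.of_forall (hC n))
  have swap (N : ℕ) : ∫ x, cesaroAverage (fun n ↦ g n x) N ∂μ
      = cesaroAverage (fun n ↦ ∫ x, g n x ∂μ) N := by
    simp only [cesaroAverage]
    rw [integral_smul, integral_finsetSum _ fun n _ ↦ hint n]
  refine (tendsto_integral_of_dominated_convergence (fun _ ↦ C) (fun N ↦ ?_)
    (integrable_const C) (fun N ↦ .of_forall fun x ↦ ?_) hlim).congr swap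
  · exact (Finset.aestronglyMeasurable_fun_sum _ fun n _ ↦ hg n).const_smul _
  · exact norm_cesaroAverage_le (fun n ↦ hC n x) N

lemma hasCesaroMean_of_tendsto (hu : Tendsto u atTop (𝓝 a)) : HasCesaroMean u a :=
  hu.cesaro_smul

lemma HasCesaroMean.exists_pos {u : ℕ → ℝ} {a : ℝ} (ha : 0 < a) (hu : HasCesaroMean u a)
    (L : ℕ) : ∃ n > L, 0 < u n := by
  by_contra! hneg
  have posPart_mean : HasCesaroMean (fun n ↦ max (u n) 0) 0 :=
    hasCesaroMean_of_tendsto <| tendsto_const_nhds.congr' <|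
      (eventually_gt_atTop L).mono fun n hn ↦ (max_eq_right (hneg n hn)).symm
  exact ha.not_ge <| le_of_tendsto_of_tendsto' hu posPart_mean
    (cesaroAverage_mono fun n ↦ le_max_left _ _)

lemma HasCesaroMean.exists_pos_and_neg_lt {w J : ℕ → ℝ} {W c : ℝ} (hW : 0 < W) (hc : 0 < c)
    (hw : ∀ n, 0 ≤ w n) (hwW : HasCesaroMean w W) (hwJ : HasCesaroMean (fun n ↦ w n * J n) 0)
    (L : ℕ) : ∃ n > L, 0 < w n ∧ -c < J n := by
  obtain ⟨n, hnL, hn⟩ := (hwJ.add (hwW.const_smul c)).exists_pos (by simpa using mul_pos hc hW) L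
  have hprod : 0 < w n * (J n + c) := by simpa only [smul_eq_mul, mul_add, mul_comm c] using hn
  have hwn : 0 < w n := (hw n).lt_of_ne' (left_ne_zero_of_mul hprod.ne')
  exact ⟨n, hnL, hwn, neg_lt_iff_pos_add.2 ((mul_pos_iff_of_pos_left hwn).1 hprod)⟩

end CesaroMean

section VanDerCorput

variable {E : Type*} [NormedAddCommGroup E] [InnerProductSpace ℝ E] {u : ℕ → E} {C : ℝ}

lemma norm_cesaroAverage_sq_le_add_sum_inner (hu : ∀ n, ‖u n‖ ≤ C) (H : ℕ) :
    ‖cesaroAverage u H‖ ^ 2 ≤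
      C ^ 2 / H + ((H : ℝ)⁻¹) ^ 2 * ∑ p ∈ (Finset.range H).offDiag, ⟪u p.1, u p.2⟫ := by
  have expand : ‖∑ n ∈ Finset.range H, u n‖ ^ 2 =
      ∑ n ∈ Finset.range H, ‖u n‖ ^ 2 + ∑ p ∈ (Finset.range H).offDiag, ⟪u p.1, u p.2⟫ := by
    rw [← real_inner_self_eq_norm_sq, sum_inner]
    simp only [inner_sum, ← real_inner_self_eq_norm_sq]
    rw [← Finset.sum_product', ← Finset.diag_union_offDiag,
      Finset.sum_union (Finset.disjoint_diag_offDiag _), Finset.sum_diag]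
  have diag : ((H : ℝ)⁻¹) ^ 2 * ∑ n ∈ Finset.range H, ‖u n‖ ^ 2 ≤ C ^ 2 / H := calc
    _ ≤ ((H : ℝ)⁻¹) ^ 2 * ∑ n ∈ Finset.range H, C ^ 2 := by gcongr; exact hu _
    _ = C ^ 2 / H := by rw [Finset.sum_const, Finset.card_range, nsmul_eq_mul]; field_simp
  rw [cesaroAverage, norm_smul, mul_pow, Real.norm_of_nonneg (by positivity), expand, mul_add]
  gcongr

/-- Van der Corput: replacing `u` by its averages over windows of length `H` does not change the
Cesàro means, and almost orthogonality of the shifts bounds the mean square of these averages by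
`C ^ 2 / H`. -/
theorem hasCesaroMean_zero_of_vanDerCorput (hu : ∀ n, ‖u n‖ ≤ C)
    (hcorr : ∀ a b, a ≠ b → HasCesaroMean (fun n ↦ ⟪u (n + a), u (n + b)⟫) 0) :
    HasCesaroMean u 0 := by
  refine Metric.tendsto_nhds.2 fun ε hε ↦ ?_
  obtain ⟨H, hH, hHε⟩ : ∃ H : ℕ, H ≠ 0 ∧ C ^ 2 / H < (ε / 2) ^ 2 :=
    ((eventually_ne_atTop 0).and
      ((tendsto_const_div_atTop_nhds_zero_nat (C ^ 2)).eventually_lt_const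
        (by positivity))).exists
  set v : ℕ → E := fun n ↦ cesaroAverage (fun h ↦ u (n + h)) H
  set w : ℕ → ℝ := fun n ↦
    C ^ 2 / H + ((H : ℝ)⁻¹) ^ 2 * ∑ p ∈ (Finset.range H).offDiag, ⟪u (n + p.1), u (n + p.2)⟫
  have norm_v_sq_le (n : ℕ) : ‖v n‖ ^ 2 ≤ w n :=
    norm_cesaroAverage_sq_le_add_sum_inner (fun h ↦ hu (n + h)) H
  have mean_w : HasCesaroMean w (C ^ 2 / H) := by
    have offDiag_mean := HasCesaroMean.sum (s := (Finset.range H).offDiag) (a := fun _ ↦ 0)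
      (u := fun p n ↦ ⟪u (n + p.1), u (n + p.2)⟫)
      fun p hp ↦ hcorr p.1 p.2 (Finset.mem_offDiag.1 hp).2.2
    simpa only [w, Finset.sum_const_zero, mul_zero, add_zero, smul_eq_mul] using
      (HasCesaroMean.const (C ^ 2 / H : ℝ)).add (offDiag_mean.const_smul (((H : ℝ)⁻¹) ^ 2))
  have mean_v_sub_u : HasCesaroMean (fun n ↦ v n - u n) 0 :=
    hasCesaroMean_sub_cesaroAverage_shift hu hH
  filter_upwards [Tendsto.eventually_lt_const hHε mean_w,
    Metric.tendsto_nhds.1 mean_v_sub_u (ε / 2) (half_pos hε)] with N hw hvu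
  have hv : ‖cesaroAverage v N‖ < ε / 2 := by
    refine lt_of_pow_lt_pow_left₀ 2 (half_pos hε).le ?_
    exact (norm_cesaroAverage_sq_le v N).trans_lt ((cesaroAverage_mono norm_v_sq_le N).trans_lt hw)
  rw [dist_zero_right] at hvu ⊢
  calc ‖cesaroAverage u N‖ = ‖cesaroAverage v N - cesaroAverage (fun n ↦ v n - u n) N‖ := by
        rw [cesaroAverage_sub, sub_sub_cancel]
    _ ≤ ‖cesaroAverage v N‖ + ‖cesaroAverage (fun n ↦ v n - u n) N‖ := norm_sub_le _ _
    _ < ε := by linarith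

end VanDerCorput

section Weyl

lemma eval_sub_eval_sub_linear_mem {R S : Type*} [CommRing R] [SetLike S R] [AddSubgroupClass S R]
    (K : S) {p : R[X]} {a b : R} (h : ∀ i ≥ 2, p.coeff i * (a ^ i - b ^ i) ∈ K) :
    p.eval a - p.eval b - p.coeff 1 * (a - b) ∈ K := by
  have eval_eq (x : R) : p.eval x = ∑ i ∈ Finset.range p.natDegree, p.coeff (i + 2) * x ^ (i + 2)
      + p.coeff 1 * x + p.coeff 0 := by
    rw [Polynomial.eval_eq_sum_range' (n := p.natDegree + 2) (by lia), Finset.sum_range_succ',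
      Finset.sum_range_succ', zero_add, pow_one, pow_zero, mul_one]
  have hsum : p.eval a - p.eval b - p.coeff 1 * (a - b)
      = ∑ i ∈ Finset.range p.natDegree, p.coeff (i + 2) * (a ^ (i + 2) - b ^ (i + 2)) := by
    simp only [eval_eq, mul_sub, Finset.sum_sub_distrib]
    ring
  rw [hsum]
  exact sum_mem fun i _ ↦ h (i + 2) (by lia)

lemma coeff_taylor_sub_taylor_sub_mem {R : Type*} [CommRing R] (K : Subring R) {p : R[X]}
    {a b : R} (ha : a ∈ K) (hb : b ∈ K) {j : ℕ} (hp : ∀ i ≥ j + 2, p.coeff i ∈ K) :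
    (Polynomial.taylor a p - Polynomial.taylor b p).coeff j
      - (j + 1) * p.coeff (j + 1) * (a - b) ∈ K := by
  have hlin : (Polynomial.hasseDeriv j p).coeff 1 = (j + 1) * p.coeff (j + 1) := by
    rw [Polynomial.hasseDeriv_coeff, add_comm 1 j, Nat.choose_succ_self_right, Nat.cast_succ]
  rw [Polynomial.coeff_sub, Polynomial.taylor_coeff, Polynomial.taylor_coeff, ← hlin]
  refine eval_sub_eval_sub_linear_mem K fun i hi ↦ ?_
  rw [Polynomial.hasseDeriv_coeff]
  exact mul_mem (mul_mem (natCast_mem K _) (hp _ (by lia))) (sub_mem (pow_mem ha i) (pow_mem hb i))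

lemma exists_common_denominator {ι : Type*} {s : Finset ι} {f : ι → ℝ}
    (hf : ∀ i ∈ s, f i ∈ (Rat.castHom ℝ).range) :
    ∃ q : ℕ, 0 < q ∧ ∀ i ∈ s, f i * q ∈ (Int.castRingHom ℝ).range := by
  choose! r hr using hf
  refine ⟨∏ i ∈ s, (r i).den, Finset.prod_pos fun i _ ↦ (r i).den_pos, fun i hi ↦ ?_⟩
  obtain ⟨m, hm⟩ := Finset.dvd_prod_of_mem (fun i ↦ (r i).den) hi
  refine ⟨(r i).num * m, ?_⟩
  have hnum : f i * (r i).den = (r i).num := by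
    rw [← hr i hi, Rat.coe_castHom]
    exact_mod_cast Rat.mul_den_eq_num (r i)
  rw [hm]
  push_cast
  rw [← mul_assoc, hnum]
  simp

lemma fourierChar_eq_one_iff {x : ℝ} : 𝐞 x = 1 ↔ x ∈ (Int.castRingHom ℝ).range := by
  rw [Real.fourierChar_apply', Circle.exp_eq_one]
  refine exists_congr fun n ↦ ?_
  rw [mul_comm, mul_left_inj' Real.two_pi_pos.ne', eq_comm, eq_intCast]

lemma hasCesaroMean_fourierChar_of_linear_irrational {p : ℝ[X]} (h1 : Irrational (p.coeff 1))
    (h2 : ∀ i ≥ 2, p.coeff i ∈ (Rat.castHom ℝ).range) :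
    HasCesaroMean (fun n ↦ (𝐞 (p.eval (n : ℝ)) : ℂ)) 0 := by
  obtain ⟨q, hq, hden⟩ := exists_common_denominator (s := Finset.Icc 2 p.natDegree) (f := p.coeff)
    fun i hi ↦ h2 i (Finset.mem_Icc.1 hi).1
  have integral (n i : ℕ) (hi : i ≥ 2) :
      p.coeff i * ((n + q : ℝ) ^ i - (n : ℝ) ^ i) ∈ (Int.castRingHom ℝ).range := by
    by_cases hdeg : i ≤ p.natDegree
    · obtain ⟨d, hd⟩ := sub_dvd_pow_sub_pow ((n : ℤ) + q) (n : ℤ) i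
      have hd' : (n + q : ℝ) ^ i - (n : ℝ) ^ i = q * d := by
        rw [add_sub_cancel_left] at hd
        exact_mod_cast hd
      rw [hd', ← mul_assoc]
      exact mul_mem (hden i (Finset.mem_Icc.2 ⟨hi, hdeg⟩)) (intCast_mem _ d)
    · rw [Polynomial.coeff_eq_zero_of_natDegree_lt (not_le.1 hdeg), zero_mul]
      exact zero_mem _
  refine hasCesaroMean_zero_of_shift_eq_mul (C := 1) (h := q) (ω := 𝐞 (p.coeff 1 * q))
    (fun n ↦ (Circle.norm_coe _).le) ?_ fun n ↦ ?_
  · rw [← Circle.coe_one, Circle.coe_inj.ne, Ne, fourierChar_eq_one_iff]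
    rintro ⟨z, hz⟩
    exact (h1.mul_natCast hq.ne').ne_int z hz.symm
  · have hmod := eval_sub_eval_sub_linear_mem _ (integral n)
    rw [add_sub_cancel_left] at hmod
    rw [← Circle.coe_mul, Circle.coe_inj, ← AddChar.map_add_eq_mul, Nat.cast_add,
      ← div_eq_one, ← AddChar.map_sub_eq_div, fourierChar_eq_one_iff]
    convert hmod using 1
    ring

lemma hasCesaroMean_fourierChar_of_top_irrational (k : ℕ) : ∀ p : ℝ[X],
    Irrational (p.coeff (k + 1)) → (∀ i ≥ k + 2, p.coeff i ∈ (Rat.castHom ℝ).range) →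
      HasCesaroMean (fun n ↦ (𝐞 (p.eval (n : ℝ)) : ℂ)) 0 := by
  induction k with
  | zero => exact fun p ↦ hasCesaroMean_fourierChar_of_linear_irrational
  | succ k ih =>
    intro p hirr hrat
    refine hasCesaroMean_zero_of_vanDerCorput (C := 1) (fun n ↦ (Circle.norm_coe _).le)
      fun b a hba ↦ ?_
    set d := Polynomial.taylor (a : ℝ) p - Polynomial.taylor (b : ℝ) p
    have hd (j : ℕ) (hj : j ≥ k + 1) :
        d.coeff j - (j + 1) * p.coeff (j + 1) * (a - b) ∈ (Rat.castHom ℝ).range :=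
      coeff_taylor_sub_taylor_sub_mem _ (natCast_mem _ a) (natCast_mem _ b)
        fun i hi ↦ hrat i (by lia)
    have correlation (n : ℕ) : ⟪(𝐞 (p.eval ((n + b : ℕ) : ℝ)) : ℂ), 𝐞 (p.eval ((n + a : ℕ) : ℝ))⟫
        = (𝐞 (d.eval (n : ℝ)) : ℂ).re := by
      rw [Complex.inner, mul_comm, ← Circle.coe_inv_eq_conj, ← Circle.coe_mul, mul_comm,
        ← div_eq_mul_inv, ← AddChar.map_sub_eq_div, Polynomial.eval_sub, Polynomial.taylor_eval,
        Polynomial.taylor_eval, Nat.cast_add, Nat.cast_add]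
    have hd_irr : Irrational (d.coeff (k + 1)) := by
      have hab : (a : ℤ) - b ≠ 0 := sub_ne_zero.2 (by exact_mod_cast hba.symm)
      have hlin : Irrational ((k + 1 + 1 : ℕ) * p.coeff (k + 2) * ((a - b : ℤ) : ℝ)) :=
        (hirr.natCast_mul k.succ.succ_ne_zero).mul_intCast hab
      refine fun hmem ↦ hlin ?_
      have hsub := (Rat.castHom ℝ).range.sub_mem hmem (hd (k + 1) le_rfl)
      rw [sub_sub_cancel] at hsub
      exact_mod_cast hsub
    have hd_rat (i : ℕ) (hi : i ≥ k + 2) : d.coeff i ∈ (Rat.castHom ℝ).range := by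
      have hmul : (i + 1) * p.coeff (i + 1) * (a - b) ∈ (Rat.castHom ℝ).range :=
        mul_mem (mul_mem (add_mem (natCast_mem _ i) (one_mem _)) (hrat _ (by lia)))
          (sub_mem (natCast_mem _ a) (natCast_mem _ b))
      simpa only [sub_add_cancel] using add_mem (hd i (by lia)) hmul
    simpa only [correlation, Complex.reCLM_apply, Complex.zero_re] using
      (ih d hd_irr hd_rat).map Complex.reCLM

theorem hasCesaroMean_fourierChar_polynomial {p : ℝ[X]} {k : ℕ} (hk : 0 < k)
    (hp : Irrational (p.coeff k)) : HasCesaroMean (fun n ↦ (𝐞 (p.eval (n : ℝ)) : ℂ)) 0 := by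
  have hfin : {i | Irrational (p.coeff i)}.Finite :=
    p.support.finite_toSet.subset fun i hi ↦ Polynomial.mem_support_iff.2 (Irrational.ne_zero hi)
  obtain ⟨m, hkm, hm, hmax⟩ := hfin.exists_le_maximal hp
  obtain ⟨j, rfl⟩ := Nat.exists_eq_add_of_lt (hk.trans_le hkm)
  rw [zero_add] at hm hmax
  exact hasCesaroMean_fourierChar_of_top_irrational j p hm fun i hi ↦
    not_not.1 fun hirr ↦ absurd (hmax hirr (by lia)) (by lia)

end Weyl

section WeylCriterion

variable {X : Type*} [TopologicalSpace X] [CompactSpace X]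

theorem hasCesaroMean_mul_of_dense_span {x : ℕ → X} {v : ℕ → ℂ} {C : ℝ} (hv : ∀ n, ‖v n‖ ≤ C)
    {Λ : C(X, ℂ) →L[ℂ] ℂ} {s : Set C(X, ℂ)} (hs : (Submodule.span ℂ s).topologicalClosure = ⊤)
    (h : ∀ f ∈ s, HasCesaroMean (fun n ↦ v n * f (x n)) (Λ f)) (f : C(X, ℂ)) :
    HasCesaroMean (fun n ↦ v n * f (x n)) (Λ f) := by
  have hspan (g : C(X, ℂ)) (hg : g ∈ Submodule.span ℂ s) :
      HasCesaroMean (fun n ↦ v n * g (x n)) (Λ g) := by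
    induction hg using Submodule.span_induction with
    | mem g hg => exact h g hg
    | zero => simpa using HasCesaroMean.const (0 : ℂ)
    | add g g' _ _ hg hg' => simpa only [map_add, ContinuousMap.add_apply, mul_add] using hg.add hg'
    | smul c g _ hg =>
      simpa only [map_smul, ContinuousMap.smul_apply, smul_eq_mul, mul_left_comm] using
        hg.const_mul c
  have hlip (N : ℕ) : LipschitzWith C.toNNReal
      fun g : C(X, ℂ) ↦ cesaroAverage (fun n ↦ v n * g (x n)) N := by
    refine .of_dist_le_mul fun g g' ↦ ?_
    rw [dist_eq_norm, dist_eq_norm, ← cesaroAverage_sub]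
    refine norm_cesaroAverage_le (fun n ↦ ?_) N
    rw [← mul_sub, norm_mul]
    gcongr
    · exact (hv n).trans (Real.le_coe_toNNReal C)
    · exact (g - g').norm_coe_le_norm (x n)
  refine EquicontinuousAt.tendsto_of_mem_closure
    ((LipschitzWith.uniformEquicontinuous _ _ hlip).equicontinuous f)
    (Λ.continuous.continuousWithinAt (s := Submodule.span ℂ s)) hspan ?_
  rw [← Submodule.topologicalClosure_coe, hs]
  trivial

variable [MeasurableSpace X] [BorelSpace X]

/-- Integration of continuous functions on a compact space, as a continuous functional. -/
noncomputable def integralFunctional (μ : Measure X) [IsFiniteMeasure μ] : C(X, ℂ) →L[ℂ] ℂ :=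
  (L1.integralCLM' ℂ).comp (ContinuousMap.toLp 1 μ ℂ)

lemma integralFunctional_apply (μ : Measure X) [IsFiniteMeasure μ] (f : C(X, ℂ)) :
    integralFunctional μ f = ∫ x, f x ∂μ := by
  rw [← integral_congr_ae (ContinuousMap.coeFn_toLp (p := 1) (𝕜 := ℂ) μ f),
    ← L1.integral_eq_integral, L1.integral_eq' ℂ]
  rfl

end WeylCriterion

section Torus

variable {ι : Type*}

/-- The orbit `n ↦ (α i * n ^ e i)_i` on the torus. -/
def monomialOrbit (α : ι → ℝ) (e : ι → ℕ) (n : ℕ) : UnitAddTorus ι :=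
  fun i ↦ ((α i * (n : ℝ) ^ e i : ℝ) : UnitAddCircle)

lemma monomialOrbit_mul (α : ι → ℝ) (e : ι → ℕ) (M n : ℕ) :
    monomialOrbit α e (M * n) = monomialOrbit (fun i ↦ α i * (M : ℝ) ^ e i) e n := by
  ext i
  simp only [monomialOrbit, Nat.cast_mul, mul_pow, mul_assoc]

/-- The Haar probability measure of the torus. -/
noncomputable abbrev torusHaar (ι : Type*) [Fintype ι] : Measure (UnitAddTorus ι) :=
  Measure.pi fun _ ↦ AddCircle.haarAddCircle

lemma integral_mFourier [Fintype ι] {m : ι → ℤ} (hm : m ≠ 0) :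
    ∫ x, UnitAddTorus.mFourier m x ∂torusHaar ι = 0 := by
  obtain ⟨i, hi⟩ := Function.ne_iff.1 hm
  have hcircle : ∫ x, fourier (m i) x ∂AddCircle.haarAddCircle (T := 1) = 0 := by
    have hcoeff := congrFun (fourierCoeff_fourier (T := 1) (m i)) 0
    rw [Pi.single_eq_of_ne (Ne.symm hi : (0 : ℤ) ≠ m i), fourierCoeff] at hcoeff
    simpa only [neg_zero, fourier_zero, one_smul] using hcoeff
  simp only [UnitAddTorus.mFourier, ContinuousMap.coe_mk]
  rw [integral_fintype_prod_eq_prod (fun i x ↦ fourier (m i) x)]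
  exact Finset.prod_eq_zero (Finset.mem_univ i) hcircle

lemma fourier_coe_eq_fourierChar (m : ℤ) (x : ℝ) :
    fourier m (x : UnitAddCircle) = 𝐞 (m * x) := by
  rw [fourier_coe_apply, Real.fourierChar_apply]
  congr 1
  push_cast
  ring

lemma addChar_map_sum {A M : Type*} [AddCommMonoid A] [CommMonoid M] (ψ : AddChar A M)
    (s : Finset ι) (x : ι → A) : ψ (∑ i ∈ s, x i) = ∏ i ∈ s, ψ (x i) :=
  map_sum ψ.toAddMonoidHom x s

lemma mFourier_monomialOrbit [Fintype ι] (m : ι → ℤ) (α : ι → ℝ) (e : ι → ℕ) (n : ℕ) :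
    UnitAddTorus.mFourier m (monomialOrbit α e n) =
      𝐞 ((∑ i, Polynomial.monomial (e i) (m i * α i)).eval (n : ℝ)) := by
  simp only [UnitAddTorus.mFourier, ContinuousMap.coe_mk, monomialOrbit,
    fourier_coe_eq_fourierChar, Polynomial.eval_finsetSum, Polynomial.eval_monomial, mul_assoc]
  rw [addChar_map_sum]
  exact (map_prod Circle.coeHom (fun i ↦ 𝐞 (m i * (α i * (n : ℝ) ^ e i))) Finset.univ).symm

theorem hasCesaroMean_fourierChar_mul_monomialOrbit [Finite ι] {α : ι → ℝ} {e : ι → ℕ} {t : ℝ}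
    (ht : Irrational t) {k : ℕ} (hk : 0 < k) (hek : ∀ i, e i ≠ k) (f : C(UnitAddTorus ι, ℂ)) :
    HasCesaroMean (fun n ↦ (𝐞 (t * (n : ℝ) ^ k) : ℂ) * f (monomialOrbit α e n)) 0 := by
  have := Fintype.ofFinite ι
  refine hasCesaroMean_mul_of_dense_span (C := 1) (Λ := 0) (fun n ↦ (Circle.norm_coe _).le)
    UnitAddTorus.span_mFourier_closure_eq_top (Set.forall_mem_range.2 fun m ↦ ?_) f
  rw [zero_apply]
  set p : ℝ[X] := Polynomial.monomial k t + ∑ i, Polynomial.monomial (e i) (m i * α i)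
  have hp : p.coeff k = t := by
    simp only [p, Polynomial.coeff_add, Polynomial.coeff_monomial_same,
      Polynomial.finsetSum_coeff, Polynomial.coeff_monomial_of_ne _ (hek _).symm,
      Finset.sum_const_zero, add_zero]
  have hphase (n : ℕ) : (𝐞 (t * (n : ℝ) ^ k) : ℂ) * UnitAddTorus.mFourier m (monomialOrbit α e n)
      = 𝐞 (p.eval (n : ℝ)) := by
    rw [mFourier_monomialOrbit, Polynomial.eval_add, Polynomial.eval_monomial,
      AddChar.map_add_eq_mul, Circle.coe_mul]
  simpa only [hphase] using hasCesaroMean_fourierChar_polynomial hk (hp ▸ ht)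

theorem hasCesaroMean_comp_monomialOrbit [Fintype ι] {α : ι → ℝ} {e : ι → ℕ}
    (hα : ∀ i, Irrational (α i)) (he : Function.Injective e) (hpos : ∀ i, 0 < e i)
    (f : C(UnitAddTorus ι, ℂ)) :
    HasCesaroMean (fun n ↦ f (monomialOrbit α e n)) (∫ x, f x ∂torusHaar ι) := by
  rw [← integralFunctional_apply]
  suffices h : ∀ m, HasCesaroMean (fun n ↦ 1 * UnitAddTorus.mFourier m (monomialOrbit α e n))
      (integralFunctional (torusHaar ι) (UnitAddTorus.mFourier m)) by
    simpa only [one_mul] using hasCesaroMean_mul_of_dense_span (fun _ ↦ norm_one.le)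
      UnitAddTorus.span_mFourier_closure_eq_top (Set.forall_mem_range.2 h) f
  intro m
  simp only [one_mul, integralFunctional_apply]
  rcases eq_or_ne m 0 with rfl | hm
  · simpa [UnitAddTorus.mFourier_zero] using HasCesaroMean.const (1 : ℂ)
  obtain ⟨i, hi⟩ := Function.ne_iff.1 hm
  rw [integral_mFourier hm]
  simp only [mFourier_monomialOrbit]
  refine hasCesaroMean_fourierChar_polynomial (hpos i) ?_
  rw [Polynomial.finsetSum_coeff, Finset.sum_eq_single i
    (fun j _ hj ↦ Polynomial.coeff_monomial_of_ne _ (he.ne hj).symm)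
    (fun h ↦ (h (Finset.mem_univ i)).elim), Polynomial.coeff_monomial_same]
  exact (hα i).intCast_mul hi

end Torus

section FourierAlongPowers

variable {ι : Type*} {α : ι → ℝ} {e : ι → ℕ} {k : ℕ}

/-- The real part `cos (2π m x)` of a character of the circle. -/
noncomputable def reFourier (m : ℤ) : C(UnitAddCircle, ℝ) :=
  ⟨fun x ↦ (fourier m x).re, Complex.continuous_re.comp (fourier m).continuous⟩

lemma reFourier_apply (m : ℤ) (x : UnitAddCircle) : reFourier m x = (fourier m x).re := rfl

lemma norm_reFourier_le_one (m : ℤ) (x : UnitAddCircle) : ‖reFourier m x‖ ≤ 1 :=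
  (Complex.abs_re_le_norm _).trans (Circle.norm_coe _).le

lemma reFourier_eq_one {m : ℤ} {x : UnitAddCircle} (h : m • x = 0) : reFourier m x = 1 := by
  rw [reFourier_apply, fourier_apply, h, AddCircle.toCircle_zero, Circle.coe_one, Complex.one_re]

lemma setOfPred_isOfFinAddOrder_eq_iUnion {A : Type*} [AddMonoid A] :
    {x : A | IsOfFinAddOrder x} = ⋃ D : ℕ, {x | D.factorial • x = 0} := by
  ext x
  simp only [Set.mem_ofPred_eq, Set.mem_iUnion]
  constructor
  · intro hx
    exact ⟨addOrderOf x, addOrderOf_dvd_iff_nsmul_eq_zero.1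
      (Nat.dvd_factorial hx.addOrderOf_pos le_rfl)⟩
  · rintro ⟨D, hD⟩
    exact isOfFinAddOrder_iff_nsmul_eq_zero.2 ⟨_, D.factorial_pos, hD⟩

section TopologicalAddMonoid

variable {A : Type*} [AddMonoid A] [TopologicalSpace A] [ContinuousAdd A] [T1Space A]
  [MeasurableSpace A] [BorelSpace A]

lemma measurableSet_setOfPred_nsmul_eq_zero (n : ℕ) : MeasurableSet {x : A | n • x = 0} :=
  (isClosed_singleton.preimage (continuous_nsmul n)).measurableSet

lemma measurableSet_setOfPred_isOfFinAddOrder : MeasurableSet {x : A | IsOfFinAddOrder x} := by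
  rw [setOfPred_isOfFinAddOrder_eq_iUnion]
  exact .iUnion fun D ↦ measurableSet_setOfPred_nsmul_eq_zero D.factorial

lemma exists_measureReal_torsion_sdiff_lt (σ : Measure A) [IsFiniteMeasure σ] {c : ℝ}
    (hc : 0 < c) :
    ∃ M : ℕ, M ≠ 0 ∧ σ.real ({x | IsOfFinAddOrder x} \ {x | M • x = 0}) < c := by
  have hmono : Monotone fun D : ℕ ↦ {x : A | D.factorial • x = 0} := fun a b hab x hx ↦
    addOrderOf_dvd_iff_nsmul_eq_zero.1
      ((addOrderOf_dvd_of_nsmul_eq_zero hx).trans (Nat.factorial_dvd_factorial hab))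
  have hlim := (ENNReal.tendsto_toReal (measure_ne_top σ _)).comp
    (tendsto_measure_iUnion_atTop (μ := σ) hmono)
  obtain ⟨D, hD⟩ := (hlim.eventually_const_lt (sub_lt_self _ hc)).exists
  refine ⟨D.factorial, D.factorial_ne_zero, ?_⟩
  rw [setOfPred_isOfFinAddOrder_eq_iUnion, measureReal_sdiff
    (Set.subset_iUnion (fun D : ℕ ↦ {x : A | D.factorial • x = 0}) D)
    (measurableSet_setOfPred_nsmul_eq_zero _)]
  exact sub_lt_comm.1 hD

end TopologicalAddMonoid

lemma neg_measureReal_sdiff_add_setIntegral_compl_le {X : Type*} [MeasurableSpace X]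
    {μ : Measure X} [IsFiniteMeasure μ] {f : X → ℝ} (hf : Integrable f μ) (hf1 : ∀ x, ‖f x‖ ≤ 1)
    {s t : Set X} (hs : MeasurableSet s) (ht : MeasurableSet t) (hst : s ⊆ t)
    (hfs : ∀ x ∈ s, 0 ≤ f x) : -μ.real (t \ s) + ∫ x in tᶜ, f x ∂μ ≤ ∫ x, f x ∂μ := by
  have hdiff : ‖∫ x in t \ s, f x ∂μ‖ ≤ 1 * μ.real (t \ s) :=
    norm_setIntegral_le_of_norm_le_const (measure_lt_top _ _) fun x _ ↦ hf1 x
  rw [one_mul] at hdiff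
  calc -μ.real (t \ s) + ∫ x in tᶜ, f x ∂μ
      ≤ (∫ x in s, f x ∂μ + ∫ x in t \ s, f x ∂μ) + ∫ x in tᶜ, f x ∂μ := by
        linarith [neg_le_of_abs_le hdiff, setIntegral_nonneg (μ := μ) hs hfs]
    _ = ∫ x, f x ∂μ := by
        rw [← integral_add_compl ht hf, ← integral_inter_add_sdiff (s := t) hs hf.integrableOn,
          Set.inter_eq_self_of_subset_right hst]

lemma irrational_of_not_isOfFinAddOrder {t : ℝ} (ht : ¬ IsOfFinAddOrder (t : UnitAddCircle)) :
    Irrational t := by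
  rintro ⟨q, hq⟩
  exact AddCircle.not_isOfFinAddOrder_iff_forall_rat_ne_div.1 ht q (by rw [hq, div_one])

theorem hasCesaroMean_mul_setIntegral_reFourier [Finite ι] (σ : Measure UnitAddCircle)
    [IsFiniteMeasure σ] (hk : 0 < k) (hek : ∀ i, e i ≠ k) {M : ℕ} (hM : M ≠ 0)
    (f : C(UnitAddTorus ι, ℝ)) :
    HasCesaroMean (fun n ↦ f (monomialOrbit α e (M * n)) *
      ∫ x in {x | IsOfFinAddOrder x}ᶜ, reFourier (((M * n : ℕ) : ℤ) ^ k) x ∂σ) 0 := by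
  simp only [← integral_const_mul]
  rw [← integral_zero UnitAddCircle ℝ]
  refine HasCesaroMean.integral (C := ‖f‖)
    (fun n ↦ ((reFourier _).continuous.const_mul _).aestronglyMeasurable) (fun n x ↦ ?_) ?_
  · rw [norm_mul]
    exact (mul_le_of_le_one_right (norm_nonneg _) (norm_reFourier_le_one _ _)).trans
      (f.norm_coe_le_norm _)
  filter_upwards [ae_restrict_mem measurableSet_setOfPred_isOfFinAddOrder.compl] with x hx
  obtain ⟨t, rfl⟩ := QuotientAddGroup.mk_surjective x
  have ht : Irrational ((M : ℝ) ^ k * t) := by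
    exact_mod_cast (irrational_of_not_isOfFinAddOrder hx).natCast_mul (pow_ne_zero k hM)
  have hmean := (hasCesaroMean_fourierChar_mul_monomialOrbit (α := fun i ↦ α i * (M : ℝ) ^ e i)
    ht hk hek ⟨fun x ↦ (f x : ℂ), by fun_prop⟩).map Complex.reCLM
  have hphase (n : ℕ) : (𝐞 ((M : ℝ) ^ k * t * (n : ℝ) ^ k) : ℂ)
      = fourier (((M * n : ℕ) : ℤ) ^ k) (t : UnitAddCircle) := by
    rw [fourier_coe_eq_fourierChar]
    congr 2
    push_cast
    ring
  simp only [hphase, map_zero, Complex.reCLM_apply, ContinuousMap.coe_mk, Complex.re_mul_ofReal,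
    ← monomialOrbit_mul, ← reFourier_apply, mul_comm (reFourier _ _)] at hmean
  exact hmean

lemma hasCesaroMean_comp_monomialOrbit_mul [Fintype ι] (hα : ∀ i, Irrational (α i))
    (he : Function.Injective e) (hpos : ∀ i, 0 < e i) {M : ℕ} (hM : M ≠ 0)
    (f : C(UnitAddTorus ι, ℝ)) :
    HasCesaroMean (fun n ↦ f (monomialOrbit α e (M * n))) (∫ x, f x ∂torusHaar ι) := by
  have hαM (i : ι) : Irrational (α i * (M : ℝ) ^ e i) := by
    exact_mod_cast (hα i).mul_natCast (pow_ne_zero (e i) hM)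
  have hmean := (hasCesaroMean_comp_monomialOrbit hαM he hpos
    ⟨fun x ↦ (f x : ℂ), by fun_prop⟩).map Complex.reCLM
  simpa only [ContinuousMap.coe_mk, Complex.reCLM_apply, integral_complex_ofReal,
    Complex.ofReal_re, ← monomialOrbit_mul] using hmean

lemma neg_measureReal_torsion_sdiff_add_le_integral_reFourier (σ : Measure UnitAddCircle)
    [IsFiniteMeasure σ] {M : ℕ} (hM : M ≠ 0) {m : ℤ} (hMm : (M : ℤ) ∣ m) :
    -σ.real ({x | IsOfFinAddOrder x} \ {x | M • x = 0}) +
      ∫ x in {x | IsOfFinAddOrder x}ᶜ, reFourier m x ∂σ ≤ ∫ x, reFourier m x ∂σ := by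
  refine neg_measureReal_sdiff_add_setIntegral_compl_le
    ((reFourier m).continuous.integrable_of_hasCompactSupport (.of_compactSpace _))
    (norm_reFourier_le_one m) (measurableSet_setOfPred_nsmul_eq_zero M)
    measurableSet_setOfPred_isOfFinAddOrder
    (fun x hx ↦ isOfFinAddOrder_iff_nsmul_eq_zero.2 ⟨M, Nat.pos_of_ne_zero hM, hx⟩)
    fun x (hx : M • x = 0) ↦ ?_
  obtain ⟨d, rfl⟩ := hMm
  rw [reFourier_eq_one (by rw [mul_comm, mul_smul, natCast_zsmul, hx, smul_zero])]
  exact zero_le_one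

theorem exists_monomialOrbit_mem_and_neg_lt_integral [Finite ι] (σ : Measure UnitAddCircle)
    [IsFiniteMeasure σ] (hk : 0 < k) (hα : ∀ i, Irrational (α i)) (he : Function.Injective e)
    (hpos : ∀ i, 0 < e i) (hek : ∀ i, e i ≠ k) {U : Set (UnitAddTorus ι)} (hU : IsOpen U)
    (hne : U.Nonempty) (L : ℕ) {c : ℝ} (hc : 0 < c) :
    ∃ r > L, monomialOrbit α e r ∈ U ∧ -c < ∫ x, reFourier ((r : ℤ) ^ k) x ∂σ := by
  obtain ⟨M, hM, hσ⟩ := exists_measureReal_torsion_sdiff_lt σ (half_pos hc)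
  have := Fintype.ofFinite ι
  obtain ⟨x₀, hx₀⟩ := hne
  obtain ⟨f, hfU, hfx₀, hf⟩ := exists_continuous_zero_one_of_isClosed hU.isClosed_compl
    isClosed_singleton (Set.disjoint_singleton_right.2 (not_not.2 hx₀))
  have hint : 0 < ∫ x, f x ∂torusHaar ι :=
    f.continuous.integral_pos_of_hasCompactSupport_nonneg_nonzero (.of_compactSpace _)
      (fun x ↦ (hf x).1) (x := x₀) (by rw [hfx₀ rfl]; exact one_ne_zero)
  obtain ⟨n, hn, hfn, hJn⟩ := HasCesaroMean.exists_pos_and_neg_lt hint (half_pos hc)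
    (fun n ↦ (hf _).1) (hasCesaroMean_comp_monomialOrbit_mul hα he hpos hM f)
    (hasCesaroMean_mul_setIntegral_reFourier σ hk hek hM f) L
  refine ⟨M * n, hn.trans_le (Nat.le_mul_of_pos_left n (Nat.pos_of_ne_zero hM)), ?_, ?_⟩
  · by_contra hU
    exact hfn.ne' (hfU hU)
  have hdvd : (M : ℤ) ∣ ((M * n : ℕ) : ℤ) ^ k :=
    dvd_pow (Int.natCast_dvd_natCast.2 (Nat.dvd_mul_right M n)) hk.ne'
  linarith [neg_measureReal_torsion_sdiff_add_le_integral_reFourier σ hM hdvd]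

end FourierAlongPowers

/-- Every probability measure on the circle has a Fourier coefficient with index in `S` and real
part greater than `-ε`. The sets `S` with this property for every `ε > 0` are the van der Corput
sets of Kamae and Mendès France. -/
def IsVanDerCorputUpTo (ε : ℝ) (S : Set ℤ) : Prop :=
  ∀ σ : ProbabilityMeasure UnitAddCircle, ∃ m ∈ S, -ε < ∫ x, reFourier m x ∂σ

section IsVanDerCorputUpTo

variable {ε : ℝ} {S : Set ℤ}

lemma IsVanDerCorputUpTo.mono {δ : ℝ} {S' : Set ℤ} (h : IsVanDerCorputUpTo ε S) (hε : ε ≤ δ)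
    (hS : S ⊆ S') : IsVanDerCorputUpTo δ S' := fun σ ↦
  let ⟨m, hm, hσ⟩ := h σ
  ⟨m, hS hm, (neg_le_neg hε).trans_lt hσ⟩

lemma IsVanDerCorputUpTo.nonempty (h : IsVanDerCorputUpTo ε S) : S.Nonempty :=
  let ⟨m, hm, _⟩ := h ⟨AddCircle.haarAddCircle, inferInstance⟩
  ⟨m, hm⟩

lemma continuous_integral_reFourier (m : ℤ) :
    Continuous fun σ : ProbabilityMeasure UnitAddCircle ↦ ∫ x, reFourier m x ∂σ :=
  ProbabilityMeasure.continuous_integral_boundedContinuousFunction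
    (BoundedContinuousFunction.mkOfCompact (reFourier m))

lemma IsVanDerCorputUpTo.exists_finite_subset (h : IsVanDerCorputUpTo ε S) :
    ∃ F ⊆ S, F.Finite ∧ IsVanDerCorputUpTo ε F := by
  obtain ⟨F, hFS, hF, hcover⟩ := isCompact_univ.elim_finite_subcover_image (b := S)
    (c := fun m ↦ {σ : ProbabilityMeasure UnitAddCircle | -ε < ∫ x, reFourier m x ∂σ})
    (fun m _ ↦ isOpen_lt continuous_const (continuous_integral_reFourier m))
    fun σ _ ↦ Set.mem_iUnion₂.2 (by simpa using h σ)
  exact ⟨F, hFS, hF, fun σ ↦ by simpa using hcover (Set.mem_univ σ)⟩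

theorem isVanDerCorputUpTo_image_pow_setOfPred_monomialOrbit_mem {ι : Type*} [Finite ι]
    {α : ι → ℝ} {e : ι → ℕ} {k : ℕ} (hk : 0 < k) (hα : ∀ i, Irrational (α i))
    (he : Function.Injective e) (hpos : ∀ i, 0 < e i) (hek : ∀ i, e i ≠ k)
    {U : Set (UnitAddTorus ι)} (hU : IsOpen U) (hne : U.Nonempty) (L : ℕ) (hε : 0 < ε) :
    IsVanDerCorputUpTo ε ((fun r : ℕ ↦ (r : ℤ) ^ k) '' {r | L < r ∧ monomialOrbit α e r ∈ U}) :=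
  fun σ ↦
    let ⟨r, hr, hrU, hσ⟩ := exists_monomialOrbit_mem_and_neg_lt_integral (σ : Measure UnitAddCircle)
      hk hα he hpos hek hU hne L hε
    ⟨_, ⟨r, ⟨hr, hrU⟩, rfl⟩, hσ⟩

end IsVanDerCorputUpTo

section Herglotz

open scoped InnerProductSpace ComplexOrder

lemma exists_starAlgHom_fourier {A : Type*} [CStarAlgebra A] (u : unitary A) :
    ∃ Φ : C(UnitAddCircle, ℂ) →⋆ₐ[ℂ] A, ∀ m : ℤ, Φ (fourier m) = (u ^ m : unitary A) := by
  have hu : IsStarNormal (u : A) := inferInstance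
  let arg : C(spectrum ℂ (u : A), UnitAddCircle) :=
    ⟨fun z ↦ (AddCircle.homeomorphCircle one_ne_zero).symm
      ⟨z, mem_sphere_zero_iff_norm.2 (spectrum.norm_eq_one_of_unitary u.2 z.2)⟩,
      (Homeomorph.continuous _).comp (by fun_prop)⟩
  have harg : arg.compStarAlgHom' ℂ ℂ (fourier 1) = .restrict (spectrum ℂ (u : A)) (.id ℂ) := by
    ext z
    simp only [ContinuousMap.compStarAlgHom'_apply, ContinuousMap.comp_apply, fourier_one,
      ContinuousMap.restrict_apply, ContinuousMap.id_apply, arg, ContinuousMap.coe_mk,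
      ← AddCircle.homeomorphCircle_apply one_ne_zero]
    exact congrArg Circle.coeHom ((AddCircle.homeomorphCircle one_ne_zero).apply_symm_apply _)
  let Φ : C(UnitAddCircle, ℂ) →⋆ₐ[ℂ] A := (cfcHom hu).comp (arg.compStarAlgHom' ℂ ℂ)
  let fourierHom : Multiplicative ℤ →* C(UnitAddCircle, ℂ) :=
    { toFun m := fourier m.toAdd
      map_one' := by ext; exact fourier_zero
      map_mul' m n := by ext; exact fourier_add }
  have hΦ : (Φ : C(UnitAddCircle, ℂ) →* A).comp fourierHom
      = (unitary A).subtype.comp (zpowersHom (unitary A) u) := by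
    refine MonoidHom.ext_mint ?_
    change cfcHom hu (arg.compStarAlgHom' ℂ ℂ (fourier 1)) = ((u ^ (1 : ℤ) : unitary A) : A)
    rw [harg, cfcHom_id, zpow_one]
  exact ⟨Φ, fun m ↦ DFunLike.congr_fun hΦ (.ofAdd m)⟩

lemma exists_isFiniteMeasure_integral_eq {X : Type*} [TopologicalSpace X] [CompactSpace X]
    [T2Space X] [MeasurableSpace X] [BorelSpace X] (Λ : C(X, ℝ) →ₗ[ℝ] ℝ)
    (hΛ : ∀ f, 0 ≤ f → 0 ≤ Λ f) :
    ∃ σ : Measure X, IsFiniteMeasure σ ∧ ∀ f : C(X, ℝ), ∫ x, f x ∂σ = Λ f :=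
  let Λ' : CompactlySupportedContinuousMap X ℝ →ₚ[ℝ] ℝ := .mk₀
    { toFun f := Λ f
      map_add' f g := map_add Λ (f : C(X, ℝ)) g
      map_smul' c f := map_smul Λ c (f : C(X, ℝ)) }
    fun f hf ↦ hΛ f hf
  ⟨RealRMK.rieszMeasure Λ', inferInstance, fun f ↦ RealRMK.integral_rieszMeasure Λ'
    (CompactlySupportedContinuousMap.continuousMapEquiv f)⟩

variable {H : Type*} [NormedAddCommGroup H] [InnerProductSpace ℂ H] [CompleteSpace H]

lemma exists_isFiniteMeasure_integral_re_eq {X : Type*} [TopologicalSpace X] [CompactSpace X]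
    [T2Space X] [MeasurableSpace X] [BorelSpace X] (Φ : C(X, ℂ) →⋆ₐ[ℂ] (H →L[ℂ] H)) (h : H) :
    ∃ σ : Measure X, IsFiniteMeasure σ ∧
      ∀ f : C(X, ℂ), ∫ x, (f x).re ∂σ = (⟪h, Φ f h⟫_ℂ).re := by
  let Λ : C(X, ℝ) →ₗ[ℝ] ℝ :=
    { toFun f := (⟪h, Φ (f.realToRCLike ℂ) h⟫_ℂ).re
      map_add' f g := by
        have hfg : (f + g).realToRCLike ℂ = f.realToRCLike ℂ + g.realToRCLike ℂ := by ext; simp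
        rw [hfg, map_add, add_apply, inner_add_right, Complex.add_re]
      map_smul' c f := by
        have hcf : (c • f).realToRCLike ℂ = (c : ℂ) • f.realToRCLike ℂ := by ext; simp
        rw [hcf, map_smul, smul_apply, inner_smul_right, Complex.re_ofReal_mul,
          RingHom.id_apply, smul_eq_mul] }
  have hΛ (f : C(X, ℝ)) (hf : 0 ≤ f) : 0 ≤ Λ f := by
    have hf' : 0 ≤ f.realToRCLike ℂ := fun x ↦ by simpa using hf x
    exact ((ContinuousLinearMap.nonneg_iff_isPositive _).1
      (map_nonneg Φ hf')).re_inner_nonneg_right h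
  obtain ⟨σ, hσ, hint⟩ := exists_isFiniteMeasure_integral_eq Λ hΛ
  refine ⟨σ, hσ, fun f ↦ ?_⟩
  let g : C(X, ℝ) := ⟨fun x ↦ (f x).re, by fun_prop⟩
  have hg : g.realToRCLike ℂ = (2⁻¹ : ℂ) • (f + star f) := by
    ext x
    simp [g, Complex.re_eq_add_conj, div_eq_inv_mul, mul_add]
  calc ∫ x, (f x).re ∂σ = (⟪h, Φ (g.realToRCLike ℂ) h⟫_ℂ).re := hint g
    _ = (⟪h, Φ f h⟫_ℂ).re := by
        have hstar : ⟪h, Φ (star f) h⟫_ℂ = conj ⟪h, Φ f h⟫_ℂ := by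
          rw [map_star, ContinuousLinearMap.star_eq_adjoint,
            ContinuousLinearMap.adjoint_inner_right, inner_conj_symm]
        rw [hg, map_smul, map_add, smul_apply, add_apply, inner_smul_right, inner_add_right,
          hstar, ← div_eq_inv_mul, ← Complex.re_eq_add_conj, Complex.ofReal_re]

theorem exists_isFiniteMeasure_integral_reFourier_eq (u : unitary (H →L[ℂ] H)) (h : H) :
    ∃ σ : Measure UnitAddCircle, IsFiniteMeasure σ ∧ ∀ m : ℤ,
      ∫ x, reFourier m x ∂σ = (⟪h, ((u ^ m : unitary (H →L[ℂ] H)) : H →L[ℂ] H) h⟫_ℂ).re := by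
  obtain ⟨Φ, hΦ⟩ := exists_starAlgHom_fourier u
  obtain ⟨σ, hσ, hint⟩ := exists_isFiniteMeasure_integral_re_eq Φ h
  exact ⟨σ, hσ, fun m ↦ by rw [← hΦ, ← hint]; rfl⟩

end Herglotz

section Koopman

open scoped InnerProductSpace

variable {X : Type*} [MeasurableSpace X] {μ : Measure X} {T : X ≃ᵐ X}

lemma measurePreserving_zpow (hT : MeasurePreserving T μ μ) :
    ∀ m : ℤ, MeasurePreserving ⇑(T.toEquiv ^ m) μ μ
  | .ofNat n => by
    rw [Int.ofNat_eq_natCast, zpow_natCast, ← Equiv.Perm.iterate_eq_pow]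
    exact hT.iterate n
  | .negSucc n => by
    rw [zpow_negSucc, ← inv_pow, ← Equiv.Perm.iterate_eq_pow]
    exact (hT.symm T).iterate (n + 1)

/-- The Koopman operator `f ↦ f ∘ T` of a measure preserving transformation, as a unitary operator
on `L²`. -/
noncomputable def koopman (hT : MeasurePreserving T μ μ) : Lp ℂ 2 μ ≃ₗᵢ[ℂ] Lp ℂ 2 μ where
  toFun := Lp.compMeasurePreserving T hT
  invFun := Lp.compMeasurePreserving T.symm (hT.symm T)
  map_add' := map_add _
  map_smul' c f := (Lp.compMeasurePreservingₗ ℂ T hT).map_smul c f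
  norm_map' f := Lp.norm_compMeasurePreserving f hT
  left_inv f := by
    simp only [← Lp.compMeasurePreserving_comp_apply, T.self_comp_symm,
      Lp.compMeasurePreserving_id_apply]
  right_inv f := by
    simp only [← Lp.compMeasurePreserving_comp_apply, T.symm_comp_self,
      Lp.compMeasurePreserving_id_apply]

lemma koopman_zpow_apply (hT : MeasurePreserving T μ μ) (m : ℤ) (f : Lp ℂ 2 μ) :
    (koopman hT ^ m) f = Lp.compMeasurePreserving _ (measurePreserving_zpow hT m) f := by
  induction m generalizing f with
  | zero => exact (Lp.compMeasurePreserving_id_apply f).symm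
  | succ n ih =>
    have hcomp : ⇑(T.toEquiv ^ (n + 1 : ℤ)) = T ∘ ⇑(T.toEquiv ^ (n : ℤ)) := by
      rw [add_comm, zpow_one_add]
      rfl
    rw [zpow_add_one, LinearIsometryEquiv.coe_mul, Function.comp_apply, ih]
    simp only [hcomp]
    exact (Lp.compMeasurePreserving_comp_apply f hT _).symm
  | pred n ih =>
    have hcomp : ⇑(T.toEquiv ^ (-n - 1 : ℤ)) = T.symm ∘ ⇑(T.toEquiv ^ (-n : ℤ)) := by
      rw [sub_eq_neg_add, zpow_add, zpow_neg_one]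
      rfl
    rw [zpow_sub_one, LinearIsometryEquiv.coe_mul, Function.comp_apply, ih]
    simp only [hcomp]
    exact (Lp.compMeasurePreserving_comp_apply f (hT.symm T) _).symm

lemma exists_forall_re_inner_koopman_zpow_eq [IsProbabilityMeasure μ]
    (hT : MeasurePreserving T μ μ) {A : Set X} (hA : MeasurableSet A) :
    ∃ h : Lp ℂ 2 μ, ∀ m : ℤ, (⟪h, (koopman hT ^ m) h⟫_ℂ).re
      = μ.real (A ∩ ⇑(T.toEquiv ^ m) ⁻¹' A) - μ.real A ^ 2 := by
  let e (B : Set X) (hB : MeasurableSet B) : Lp ℂ 2 μ :=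
    indicatorConstLp 2 hB (measure_ne_top μ B) 1
  have hinner {B C : Set X} (hB : MeasurableSet B) (hC : MeasurableSet C) :
      ⟪e B hB, e C hC⟫_ℂ = μ.real (B ∩ C) :=
    L2.inner_indicatorConstLp_one_indicatorConstLp_one hB hC
  have hpow (m : ℤ) {B : Set X} (hB : MeasurableSet B) :
      (koopman hT ^ m) (e B hB) = e _ (hB.preimage (measurePreserving_zpow hT m).measurable) := by
    rw [koopman_zpow_apply]
    exact Lp.indicatorConstLp_compMeasurePreserving hB _ _ _
  refine ⟨e A hA - (μ.real A : ℂ) • e _ .univ, fun m ↦ ?_⟩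
  have hAm : μ.real (⇑(T.toEquiv ^ m) ⁻¹' A) = μ.real A :=
    (measurePreserving_zpow hT m).measureReal_preimage hA.nullMeasurableSet
  simp only [map_sub, map_smul, hpow, Set.preimage_univ, inner_sub_left, inner_sub_right,
    inner_smul_left, inner_smul_right, hinner, Complex.conj_ofReal, Set.inter_univ, Set.univ_inter,
    hAm, probReal_univ, ← Complex.ofReal_mul, ← Complex.ofReal_sub, Complex.ofReal_re]
  ring

theorem exists_isFiniteMeasure_integral_reFourier_eq_sub [IsProbabilityMeasure μ]
    (hT : MeasurePreserving T μ μ) {A : Set X} (hA : MeasurableSet A) :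
    ∃ σ : Measure UnitAddCircle, IsFiniteMeasure σ ∧ ∀ m : ℤ, ∫ x, reFourier m x ∂σ
      = μ.real (A ∩ ⇑(T.toEquiv ^ m) ⁻¹' A) - μ.real A ^ 2 := by
  obtain ⟨h, hh⟩ := exists_forall_re_inner_koopman_zpow_eq hT hA
  obtain ⟨σ, hσ, hint⟩ := exists_isFiniteMeasure_integral_reFourier_eq
    (Unitary.linearIsometryEquiv.symm (koopman hT)) h
  refine ⟨σ, hσ, fun m ↦ ?_⟩
  rw [hint, ← hh, ← map_zpow]
  rfl

end Koopman

section Recurrence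

lemma IsVanDerCorputUpTo.exists_neg_mul_le_integral {ε : ℝ} {S : Set ℤ}
    (h : IsVanDerCorputUpTo ε S) (σ : Measure UnitAddCircle) [IsFiniteMeasure σ] :
    ∃ m ∈ S, -(ε * σ.real Set.univ) ≤ ∫ x, reFourier m x ∂σ := by
  rcases eq_zero_or_neZero σ with rfl | hσ
  · obtain ⟨m, hm⟩ := h.nonempty
    exact ⟨m, hm, by simp⟩
  · obtain ⟨m, hm, hlt⟩ := h ⟨(σ Set.univ)⁻¹ • σ, isProbabilityMeasureSMul⟩
    refine ⟨m, hm, ?_⟩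
    rw [ProbabilityMeasure.coe_mk, integral_smul_measure, ENNReal.toReal_inv, smul_eq_mul,
      ← measureReal_def, lt_inv_mul_iff₀ measureReal_univ_pos] at hlt
    linarith

variable {X : Type*} [MeasurableSpace X] {μ : Measure X} [IsProbabilityMeasure μ] {T : X ≃ᵐ X}

theorem IsVanDerCorputUpTo.exists_measureReal_inter_pos {S : Set ℤ} {A : Set X}
    (h : IsVanDerCorputUpTo (μ.real A) S) (hT : MeasurePreserving T μ μ) (hA : MeasurableSet A)
    (hA₀ : 0 < μ.real A) :
    ∃ m ∈ S, 0 < μ.real (A ∩ ⇑(T.toEquiv ^ m) ⁻¹' A) := by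
  obtain ⟨σ, hσ, hint⟩ := exists_isFiniteMeasure_integral_reFourier_eq_sub hT hA
  have hmass : σ.real Set.univ = μ.real A - μ.real A ^ 2 := by
    simpa [reFourier_apply] using hint 0
  obtain ⟨m, hm, hle⟩ := h.exists_neg_mul_le_integral σ
  refine ⟨m, hm, ?_⟩
  rw [hint, hmass] at hle
  linarith [pow_pos hA₀ 3]

lemma iInter_range_two_zpow_preimage {X : Type*} (g : Equiv.Perm X) (m : ℤ) (A : Set X) :
    ⋂ i ∈ Finset.range (1 + 1), ⇑(g ^ ((i : ℤ) * m)) ⁻¹' A = A ∩ ⇑(g ^ m) ⁻¹' A := by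
  simp [Finset.range_add_one, Set.inter_comm]

theorem isSetOfMultRecurrence_one_of_forall_isVanDerCorputUpTo {S : Set ℤ} (hS : 0 ∉ S)
    (h : ∀ ε > 0, IsVanDerCorputUpTo ε S) : IsSetOfMultRecurrence 1 S := by
  intro X _ μ _ T hT A hA hA₀
  have hA₀' : 0 < μ.real A := ENNReal.toReal_pos hA₀.ne' (measure_ne_top μ A)
  obtain ⟨m, hm, hpos⟩ := (h _ hA₀').exists_measureReal_inter_pos hT hA hA₀'
  refine ⟨m, hm, ne_of_mem_of_not_mem hm hS, ?_⟩
  rw [iInter_range_two_zpow_preimage]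
  exact (ENNReal.toReal_pos_iff.1 hpos).1

end Recurrence

section Rotation

lemma not_isSetOfMultRecurrence_one_of_le_norm_zsmul {K : Type} [SeminormedAddCommGroup K]
    [MeasurableSpace K] [BorelSpace K] (μ : Measure K) [IsProbabilityMeasure μ]
    [μ.IsAddLeftInvariant] [μ.IsOpenPosMeasure] (a : K) {S : Set ℤ} {δ : ℝ} (hδ : 0 < δ)
    (hS : ∀ m ∈ S, δ ≤ ‖m • a‖) : ¬ IsSetOfMultRecurrence 1 S := by
  intro h
  obtain ⟨m, hm, -, hpos⟩ := h K _ μ inferInstance (.addLeft a) (measurePreserving_add_left μ a)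
    (Metric.ball 0 (δ / 2)) measurableSet_ball (Metric.measure_ball_pos μ 0 (half_pos hδ))
  rw [iInter_range_two_zpow_preimage] at hpos
  obtain ⟨x, hx, hmx⟩ := nonempty_of_measure_ne_zero hpos.ne'
  have hrot : ((MeasurableEquiv.addLeft a).toEquiv ^ m) x = m • a + x :=
    DFunLike.congr_fun (Equiv.zsmul_addLeft a m) x
  rw [Set.mem_preimage, hrot, mem_ball_zero_iff] at hmx
  rw [mem_ball_zero_iff] at hx
  have hnorm : ‖m • a‖ ≤ ‖m • a + x‖ + ‖x‖ := by
    simpa using norm_sub_le (m • a + x) x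
  linarith [hS m hm]

lemma exists_pos_forall_le_of_finite_lt {α : Type*} {f : α → ℝ} {s : Set α} {δ : ℝ}
    (hδ : 0 < δ) (hf : ∀ x ∈ s, 0 < f x) (hfin : {x ∈ s | f x < δ}.Finite) :
    ∃ δ' > 0, ∀ x ∈ s, δ' ≤ f x := by
  have hsmall : ∀ᶠ δ' in 𝓝[>] (0 : ℝ), ∀ x ∈ {x ∈ s | f x < δ}, δ' ≤ f x :=
    (eventually_all_finite hfin).2 fun x hx ↦
      mem_of_superset (Ioc_mem_nhdsGT (hf x hx.1)) fun _ hy ↦ hy.2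
  obtain ⟨δ', hδ', hpos, hle⟩ := (hsmall.and (Ioc_mem_nhdsGT hδ)).exists
  refine ⟨δ', hpos, fun x hx ↦ ?_⟩
  rcases lt_or_ge (f x) δ with hlt | hge
  exacts [hδ' x ⟨hx, hlt⟩, hle.trans hge]

lemma norm_coe_unitAddCircle_pos_of_irrational {x : ℝ} (hx : Irrational x) :
    0 < ‖(x : UnitAddCircle)‖ := by
  rw [UnitAddCircle.norm_eq]
  exact abs_pos.2 (sub_ne_zero.2 (hx.ne_int _))

theorem not_isSetOfMultRecurrence_one_image_pow {α δ : ℝ} (hα : Irrational α) (hδ : 0 < δ)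
    {R : Set ℕ} (hR : 0 ∉ R) {j : ℕ}
    (hfin : {r ∈ R | ‖((α * (r : ℝ) ^ j : ℝ) : UnitAddCircle)‖ < δ}.Finite) :
    ¬ IsSetOfMultRecurrence 1 ((fun r : ℕ ↦ (r : ℤ) ^ j) '' R) := by
  have hirr (r : ℕ) (hr : r ∈ R) : Irrational (α * (r : ℝ) ^ j) := by
    exact_mod_cast hα.mul_natCast (pow_ne_zero j (ne_of_mem_of_not_mem hr hR))
  obtain ⟨δ', hδ', hle⟩ := exists_pos_forall_le_of_finite_lt hδ
    (fun r hr ↦ norm_coe_unitAddCircle_pos_of_irrational (hirr r hr)) hfin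
  refine not_isSetOfMultRecurrence_one_of_le_norm_zsmul AddCircle.haarAddCircle
    (α : UnitAddCircle) hδ' ?_
  rintro _ ⟨r, hr, rfl⟩
  rw [← AddCircle.coe_zsmul, zsmul_eq_mul, mul_comm]
  exact_mod_cast hle r hr

end Rotation

section Construction

/-- The natural numbers `r` such that, for every `j ∈ E`, the number `α * r ^ j` is at distance more
than `1 / 4` from the nearest integer. -/
def farFromIntegers (α : ℝ) (E : Set ℕ) : Set ℕ :=
  {r | ∀ j ∈ E, 1 / 4 < ‖((α * (r : ℝ) ^ j : ℝ) : UnitAddCircle)‖}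

lemma isVanDerCorputUpTo_image_pow_farFromIntegers {α ε : ℝ} (hα : Irrational α) (hε : 0 < ε)
    {E : Set ℕ} (hE : E.Finite) (hE₀ : 0 ∉ E) {k : ℕ} (hk : 0 < k) (hkE : k ∉ E) (L : ℕ) :
    IsVanDerCorputUpTo ε ((fun r : ℕ ↦ (r : ℤ) ^ k) '' (Set.Ioi L ∩ farFromIntegers α E)) := by
  have := hE.to_subtype
  have hU : IsOpen {x : UnitAddTorus E | ∀ j, 1 / 4 < ‖x j‖} := by
    simp only [Set.ofPred_forall]
    exact isOpen_iInter_of_finite fun j ↦ isOpen_lt continuous_const (by fun_prop)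
  have hne : {x : UnitAddTorus E | ∀ j, 1 / 4 < ‖x j‖}.Nonempty :=
    ⟨fun _ ↦ ((1 / 2 : ℝ) : UnitAddCircle), fun _ ↦ by
      rw [AddCircle.norm_half_period_eq]
      norm_num⟩
  refine (isVanDerCorputUpTo_image_pow_setOfPred_monomialOrbit_mem hk (α := fun _ ↦ α)
    (fun _ ↦ hα) Subtype.val_injective
    (fun j ↦ Nat.pos_of_ne_zero (ne_of_mem_of_not_mem j.2 hE₀))
    (fun j ↦ ne_of_mem_of_not_mem j.2 hkE) hU hne L hε).mono le_rfl (Set.image_mono ?_)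
  exact fun r hr ↦ ⟨hr.1, fun j hj ↦ hr.2 ⟨j, hj⟩⟩

lemma exists_finite_subset_forall_isVanDerCorputUpTo_image {κ β : Type*} {K : Set κ}
    (hK : K.Finite) {f : κ → β → ℤ} {S : Set β} {ε : ℝ}
    (h : ∀ k ∈ K, IsVanDerCorputUpTo ε (f k '' S)) :
    ∃ F ⊆ S, F.Finite ∧ ∀ k ∈ K, IsVanDerCorputUpTo ε (f k '' F) := by
  have hsub (k : κ) : ∃ F ⊆ S, F.Finite ∧ (k ∈ K → IsVanDerCorputUpTo ε (f k '' F)) := by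
    by_cases hk : k ∈ K
    · obtain ⟨F, hFS, hFfin, hF⟩ :=
        Set.exists_subset_image_finite_and.1 (h k hk).exists_finite_subset
      exact ⟨F, hFS, hFfin, fun _ ↦ hF⟩
    · exact ⟨∅, S.empty_subset, Set.finite_empty, (absurd · hk)⟩
  choose F hFS hfin hF using hsub
  exact ⟨⋃ k ∈ K, F k, Set.iUnion₂_subset fun k _ ↦ hFS k, hK.biUnion fun k _ ↦ hfin k,
    fun k hk ↦ (hF k hk).mono le_rfl (Set.image_mono (Set.subset_biUnion_of_mem hk))⟩

theorem exists_infinite_isVanDerCorputUpTo_image_pow {α : ℝ} (hα : Irrational α) (G : Set ℕ) :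
    ∃ R : Set ℕ, R.Infinite ∧ 0 ∉ R ∧
      (∀ k ∈ G, 0 < k → ∀ ε > 0, IsVanDerCorputUpTo ε ((fun r : ℕ ↦ (r : ℤ) ^ k) '' R)) ∧
      ∀ j ∉ G, 0 < j →
        {r ∈ R | ‖((α * (r : ℝ) ^ j : ℝ) : UnitAddCircle)‖ < 1 / 4}.Finite := by
  have hstage (n : ℕ) : ∃ F ⊆ Set.Ioi n ∩ farFromIntegers α (Set.Icc 1 n \ G), F.Finite ∧
      ∀ k ∈ Set.Icc 1 (n + 1) \ (Set.Icc 1 n \ G),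
        IsVanDerCorputUpTo (1 / (n + 1)) ((fun r : ℕ ↦ (r : ℤ) ^ k) '' F) :=
    exists_finite_subset_forall_isVanDerCorputUpTo_image ((Set.finite_Icc 1 (n + 1)).sdiff)
      fun k hk ↦ isVanDerCorputUpTo_image_pow_farFromIntegers hα Nat.one_div_pos_of_nat
        ((Set.finite_Icc 1 n).sdiff) (by simp) hk.1.1 hk.2 n
  choose F hF hfin hvdC using hstage
  refine ⟨⋃ n, F n, ?_, ?_, fun k hkG hk ε hε ↦ ?_, fun j hjG hj ↦ ?_⟩
  · refine Set.infinite_of_forall_exists_gt fun n ↦ ?_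
    obtain ⟨r, hr⟩ := (hvdC n (n + 1) (by simp)).nonempty.of_image
    exact ⟨r, Set.mem_iUnion_of_mem n hr, (hF n hr).1⟩
  · rw [Set.mem_iUnion]
    rintro ⟨n, hn⟩
    exact absurd (hF n hn).1 n.not_lt_zero
  · obtain ⟨n, hn⟩ := exists_nat_one_div_lt hε
    have hmax : (1 : ℝ) / ((max k n : ℕ) + 1) ≤ ε :=
      (Nat.one_div_le_one_div (le_max_right k n)).trans hn.le
    refine (hvdC (max k n) k ?_).mono hmax (Set.image_mono (Set.subset_iUnion F _))
    exact ⟨⟨hk, by omega⟩, fun h ↦ h.2 hkG⟩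
  · refine ((Set.finite_Iio j).biUnion fun n _ ↦ hfin n).subset ?_
    rintro r ⟨hr, hlt⟩
    obtain ⟨n, hn⟩ := Set.mem_iUnion.1 hr
    refine Set.mem_biUnion (Set.mem_Iio.2 (lt_of_not_ge fun hjn ↦ ?_)) hn
    exact hlt.not_gt ((hF n hn).2 j ⟨⟨hj, hjn⟩, hjG⟩)

end Construction

end PowerRecurrence

theorem statement2 (G : Set ℕ) (hG : ∀ g ∈ G, 0 < g) :
    ∃ R : Set ℕ, R.Infinite ∧ (∀ r ∈ R, 0 < r) ∧
      ∀ k : ℕ, 0 < k →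
        (IsSetOfMultRecurrence 1 ((fun r : ℕ => (r : ℤ) ^ k) '' R) ↔ k ∈ G) := by
  obtain ⟨R, hinf, hR₀, hvdC, hfin⟩ :=
    PowerRecurrence.exists_infinite_isVanDerCorputUpTo_image_pow irrational_sqrt_two G
  have hpos (r : ℕ) (hr : r ∈ R) : 0 < r := Nat.pos_of_ne_zero (ne_of_mem_of_not_mem hr hR₀)
  refine ⟨R, hinf, hpos, fun k hk ↦ ⟨fun hrec ↦ ?_, fun hkG ↦ ?_⟩⟩
  · by_contra hkG
    exact PowerRecurrence.not_isSetOfMultRecurrence_one_image_pow irrational_sqrt_two (by norm_num)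
      hR₀ (hfin k hkG hk) hrec
  · refine PowerRecurrence.isSetOfMultRecurrence_one_of_forall_isVanDerCorputUpTo ?_
      (hvdC k hkG hk)
    rintro ⟨r, hr, hrk⟩
    exact pow_ne_zero k (Nat.cast_ne_zero.2 (hpos r hr).ne') hrk
end

section
/- Let ℓ be a positive integer, let R be a set of ℓ-recurrence, and let p be a polynomial with integer coefficients, zero constant term, and degree at most ℓ. Then for every real number α and every ε > 0 there exists a nonzero r ∈ R such that the fractional part {p(r)·α} lies in [0,ε] ∪ [1−ε,1). -/
/-!
Given `β` in a compact abelian group `G`, let `T` be the affine map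
`(x₀, x₁, x₂, …) ↦ (β + x₀, x₁ + x₀, x₂ + x₁, …)` of `ℕ → G`, which preserves Haar measure. Along
an orbit, the `j`-th coordinate is a polynomial in time of degree `j + 1` whose `(j + 1)`-th
difference is `β`, so its `(j + 1)`-th difference with step `r` is `r ^ (j + 1) • β`. If
`x, T ^ r x, …, T ^ (ℓ * r) x` all have their first `ℓ` coordinates close to `0`, this difference,
a combination of boundedly many small terms, is small. Multiple recurrence provides such a return
time `r ∈ R`, and then every integer combination of `r • β, …, r ^ ℓ • β` with fixed coefficients
is small too.
-/

open Filter MeasureTheory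

section ForwardDifference

variable {M G : Type*}

theorem fwdDiff_comm_s8 [AddCommMonoid M] [AddCommGroup G] (h k : M) (f : M → G) :
    fwdDiff h (fwdDiff k f) = fwdDiff k (fwdDiff h f) := by
  funext y
  simp only [fwdDiff, add_right_comm y h k]
  abel

theorem fwdDiff_zsmul_eq_const [AddCommGroup M] [AddCommGroup G] {h : M} {f : M → G} {c : G}
    (hf : fwdDiff h f = fun _ ↦ c) (r : ℤ) : fwdDiff (r • h) f = fun _ ↦ r • c := by
  let F : AddConstMap M G h c := ⟨f, fun y ↦ eq_add_of_sub_eq' (congrFun hf y)⟩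
  exact funext fun y ↦ sub_eq_of_eq_add' (AddConstMapClass.map_add_zsmul F y r)

theorem fwdDiff_iterate_zsmul_eq_const [AddCommGroup M] [AddCommGroup G] {h : M} {f : M → G}
    {c : G} {d : ℕ} (hf : (fwdDiff h)^[d] f = fun _ ↦ c) (r : ℤ) :
    (fwdDiff (r • h))^[d] f = fun _ ↦ r ^ d • c := by
  induction d generalizing f c with
  | zero => simpa using hf
  | succ d ih =>
    have hstep : (fwdDiff h)^[d] (fwdDiff (r • h) f) = fun _ ↦ r • c := by
      rw [Function.Commute.iterate_left (fwdDiff_comm_s8 h (r • h)) d f]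
      rw [Function.iterate_succ_apply'] at hf
      exact fwdDiff_zsmul_eq_const hf r
    rw [Function.iterate_succ_apply, ih hstep, smul_smul, ← pow_succ]

theorem norm_fwdDiff_iterate_le [AddCommMonoid M] [SeminormedAddCommGroup G] {h y : M} {f : M → G}
    {d : ℕ} {δ : ℝ} (hf : ∀ k ≤ d, ‖f (y + k • h)‖ ≤ δ) : ‖(fwdDiff h)^[d] f y‖ ≤ 2 ^ d * δ := by
  induction d generalizing y with
  | zero => simpa using hf 0 le_rfl
  | succ d ih =>
    have hy : ‖(fwdDiff h)^[d] f y‖ ≤ 2 ^ d * δ := ih fun k hk ↦ hf k (hk.trans d.le_succ)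
    have hyh : ‖(fwdDiff h)^[d] f (y + h)‖ ≤ 2 ^ d * δ := ih fun k hk ↦ by
      simpa only [succ_nsmul', add_assoc] using hf (k + 1) (Nat.succ_le_succ hk)
    calc ‖(fwdDiff h)^[d + 1] f y‖ = ‖(fwdDiff h)^[d] f (y + h) - (fwdDiff h)^[d] f y‖ := by
          rw [Function.iterate_succ_apply', fwdDiff]
      _ ≤ 2 ^ d * δ + 2 ^ d * δ := norm_sub_le_of_le hyh hy
      _ = 2 ^ (d + 1) * δ := by ring

end ForwardDifference

section SkewTorus

variable {G : Type*} [AddCommGroup G] [TopologicalSpace G] [IsTopologicalAddGroup G]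

/-- The unipotent automorphism `(x₀, x₁, x₂, …) ↦ (x₀, x₁ + x₀, x₂ + x₁, …)` of the topological
group `ℕ → G`, the linear part of `skew`. -/
def shear : (ℕ → G) ≃ₜ+ (ℕ → G) where
  toFun x
    | 0 => x 0
    | j + 1 => x (j + 1) + x j
  invFun x j := Nat.rec (x 0) (fun i y ↦ x (i + 1) - y) j
  left_inv x := by
    funext j
    induction j with
    | zero => rfl
    | succ j ih => exact sub_eq_of_eq_add (congrArg (x (j + 1) + ·) ih.symm)
  right_inv x := by
    funext j
    cases j with
    | zero => rfl
    | succ j => exact sub_add_cancel _ _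
  map_add' x y := by
    funext j
    cases j with
    | zero => rfl
    | succ j => exact add_add_add_comm _ _ _ _
  continuous_toFun := continuous_pi fun
    | 0 => continuous_apply 0
    | j + 1 => (continuous_apply (j + 1)).add (continuous_apply j)
  continuous_invFun := continuous_pi fun j ↦ by
    induction j with
    | zero => exact continuous_apply 0
    | succ j ih => exact (continuous_apply (j + 1)).sub ih

/-- The affine map `(x₀, x₁, x₂, …) ↦ (β + x₀, x₁ + x₀, x₂ + x₁, …)` of `ℕ → G`, whose orbits have
polynomial coordinates. Using infinitely many coordinates lets one system serve all degrees. -/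
def skew (β : G) : (ℕ → G) ≃ₜ (ℕ → G) :=
  shear.toHomeomorph.trans (Homeomorph.addLeft (Pi.single 0 β))

theorem skew_apply_zero (β : G) (x : ℕ → G) : skew β x 0 = β + x 0 := by
  change (Pi.single 0 β : ℕ → G) 0 + x 0 = _
  rw [Pi.single_eq_same]

theorem skew_apply_succ (β : G) (x : ℕ → G) (j : ℕ) : skew β x (j + 1) = x (j + 1) + x j := by
  change (Pi.single 0 β : ℕ → G) (j + 1) + (x (j + 1) + x j) = _
  rw [Pi.single_eq_of_ne j.succ_ne_zero, zero_add]

theorem measurePreserving_skew [CompactSpace G] [MeasurableSpace (ℕ → G)] [BorelSpace (ℕ → G)]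
    (β : G) (μ : Measure (ℕ → G)) [μ.IsAddHaarMeasure] : MeasurePreserving (skew β) μ μ :=
  (measurePreserving_add_left μ (Pi.single 0 β)).comp
    ((shear (G := G) : (ℕ → G) →+ (ℕ → G)).measurePreserving shear.continuous_toFun
      shear.surjective rfl)

theorem fwdDiff_iterate_skew_zpow_apply (β : G) (x : ℕ → G) (j : ℕ) :
    (fwdDiff 1)^[j + 1] (fun m : ℤ ↦ ((skew β).toEquiv ^ m) x j) = fun _ ↦ β := by
  have zpow_succ_apply (m : ℤ) :
      ((skew β).toEquiv ^ (m + 1)) x = skew β (((skew β).toEquiv ^ m) x) := by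
    rw [add_comm, zpow_one_add]
    rfl
  induction j with
  | zero =>
    funext m
    simp [fwdDiff, zpow_succ_apply, skew_apply_zero]
  | succ j ih =>
    have fwdDiff_coord : fwdDiff 1 (fun m : ℤ ↦ ((skew β).toEquiv ^ m) x (j + 1)) =
        fun m : ℤ ↦ ((skew β).toEquiv ^ m) x j := by
      funext m
      simp [fwdDiff, zpow_succ_apply, skew_apply_succ]
    rw [Function.iterate_succ_apply, fwdDiff_coord, ih]

end SkewTorus

theorem norm_pow_smul_le_of_norm_skew_le {G : Type*} [SeminormedAddCommGroup G] {β : G}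
    {x : ℕ → G} {r : ℤ} {j : ℕ} {δ : ℝ}
    (hx : ∀ k ≤ j + 1, ‖((skew β).toEquiv ^ ((k : ℤ) * r)) x j‖ ≤ δ) :
    ‖r ^ (j + 1) • β‖ ≤ 2 ^ (j + 1) * δ := by
  rw [← congrFun (fwdDiff_iterate_zsmul_eq_const (fwdDiff_iterate_skew_zpow_apply β x j) r) 0]
  exact norm_fwdDiff_iterate_le fun k hk ↦ by simpa using hx k hk

theorem norm_eval_smul_le {G : Type*} [SeminormedAddCommGroup G] {p : Polynomial ℤ} {r : ℤ} {β : G}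
    {δ : ℝ} (h : ∀ j ∈ p.support, ‖r ^ j • β‖ ≤ δ) :
    ‖p.eval r • β‖ ≤ (∑ j ∈ p.support, ‖p.coeff j‖) * δ := by
  rw [Polynomial.eval_eq_sum, Polynomial.sum, Finset.sum_smul, Finset.sum_mul]
  refine norm_sum_le_of_le _ fun j hj ↦ ?_
  calc ‖(p.coeff j * r ^ j) • β‖ = ‖p.coeff j • r ^ j • β‖ := by rw [mul_smul]
    _ ≤ ‖p.coeff j‖ * ‖r ^ j • β‖ := norm_zsmul_le _ _
    _ ≤ ‖p.coeff j‖ * δ := by gcongr; exact h j hj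

namespace IsSetOfMultRecurrence

variable {ℓ : ℕ} {R : Set ℤ}

theorem exists_forall_zpow_apply_mem (hR : IsSetOfMultRecurrence ℓ R) {X : Type}
    [MeasurableSpace X] {μ : Measure X} [IsProbabilityMeasure μ] {T : X ≃ᵐ X}
    (hT : MeasurePreserving T μ μ) {A : Set X} (hA : MeasurableSet A) (hμA : 0 < μ A) :
    ∃ r ∈ R, r ≠ 0 ∧ ∃ x, ∀ k ≤ ℓ, (T.toEquiv ^ ((k : ℤ) * r)) x ∈ A := by
  obtain ⟨r, hrR, hr0, hr⟩ := hR X _ μ inferInstance T hT A hA hμA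
  obtain ⟨x, hx⟩ := nonempty_of_measure_ne_zero hr.ne'
  exact ⟨r, hrR, hr0, x, fun k hk ↦
    Set.mem_iInter₂.mp hx k (Finset.mem_range.mpr (Nat.lt_succ_of_le hk))⟩

variable {G : Type} [NormedAddCommGroup G] [CompactSpace G]

theorem exists_forall_norm_skew_lt (hR : IsSetOfMultRecurrence ℓ R) (β : G) {δ : ℝ}
    (hδ : 0 < δ) :
    ∃ r ∈ R, r ≠ 0 ∧ ∃ x : ℕ → G, ∀ k ≤ ℓ, ∀ j < ℓ,
      ‖((skew β).toEquiv ^ ((k : ℤ) * r)) x j‖ < δ := by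
  borelize (ℕ → G)
  let μ : Measure (ℕ → G) := Measure.addHaarMeasure ⊤
  have : IsProbabilityMeasure μ := ⟨Measure.addHaarMeasure_self⟩
  let A : Set (ℕ → G) := (Set.Iio ℓ).pi fun _ ↦ Metric.ball 0 δ
  have hA : IsOpen A := isOpen_set_pi (Set.finite_Iio ℓ) fun _ _ ↦ Metric.isOpen_ball
  have hμA : 0 < μ A := hA.measure_pos μ ⟨0, fun _ _ ↦ Metric.mem_ball_self hδ⟩
  obtain ⟨r, hrR, hr0, x, hx⟩ := hR.exists_forall_zpow_apply_mem
    (T := (skew β).toMeasurableEquiv) (measurePreserving_skew β μ) hA.measurableSet hμA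
  exact ⟨r, hrR, hr0, x, fun k hk j hj ↦ mem_ball_zero_iff.mp (hx k hk j hj)⟩

theorem exists_forall_norm_pow_smul_le (hR : IsSetOfMultRecurrence ℓ R) (β : G) {δ : ℝ}
    (hδ : 0 < δ) : ∃ r ∈ R, r ≠ 0 ∧ ∀ j ∈ Finset.Icc 1 ℓ, ‖r ^ j • β‖ ≤ δ := by
  obtain ⟨r, hrR, hr0, x, hx⟩ := hR.exists_forall_norm_skew_lt β (δ := δ / 2 ^ ℓ) (by positivity)
  refine ⟨r, hrR, hr0, fun j hj ↦ ?_⟩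
  obtain ⟨hj1, hjℓ⟩ := Finset.mem_Icc.mp hj
  obtain ⟨i, rfl⟩ := Nat.exists_eq_add_of_le' hj1
  calc ‖r ^ (i + 1) • β‖ ≤ 2 ^ (i + 1) * (δ / 2 ^ ℓ) :=
        norm_pow_smul_le_of_norm_skew_le fun k hk ↦ (hx k (hk.trans hjℓ) i hjℓ).le
    _ ≤ 2 ^ ℓ * (δ / 2 ^ ℓ) := by gcongr; norm_num
    _ = δ := mul_div_cancel₀ δ (by positivity)

end IsSetOfMultRecurrence

theorem norm_coe_unitAddCircle_le_iff {x ε : ℝ} :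
    ‖(x : UnitAddCircle)‖ ≤ ε ↔ Int.fract x ∈ Set.Icc 0 ε ∪ Set.Ico (1 - ε) 1 := by
  simp only [UnitAddCircle.norm_eq, abs_sub_round_eq_min, min_le_iff, Set.mem_union, Set.mem_Icc,
    Set.mem_Ico, Int.fract_nonneg, Int.fract_lt_one, true_and, and_true, sub_le_comm]

theorem statement8_general {G : Type} [NormedAddCommGroup G] [CompactSpace G] {ℓ : ℕ} {R : Set ℤ}
    (hR : IsSetOfMultRecurrence ℓ R) {p : Polynomial ℤ} (hp0 : p.coeff 0 = 0)
    (hpdeg : p.natDegree ≤ ℓ) (β : G) {ε : ℝ} (hε : 0 < ε) :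
    ∃ r ∈ R, r ≠ 0 ∧ ‖p.eval r • β‖ ≤ ε := by
  set C : ℝ := ∑ j ∈ p.support, ‖p.coeff j‖
  have hC : 0 < C + 1 := by positivity
  obtain ⟨r, hrR, hr0, hr⟩ :=
    hR.exists_forall_norm_pow_smul_le β (div_pos hε hC)
  have hpow : ∀ j ∈ p.support, ‖r ^ j • β‖ ≤ ε / (C + 1) := fun j hj ↦ by
    have hj0 : j ≠ 0 := by
      rintro rfl
      exact Polynomial.mem_support_iff.mp hj hp0
    exact hr j (Finset.mem_Icc.mpr
      ⟨Nat.one_le_iff_ne_zero.mpr hj0, (Polynomial.le_natDegree_of_mem_supp j hj).trans hpdeg⟩)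
  refine ⟨r, hrR, hr0, ?_⟩
  calc ‖p.eval r • β‖ ≤ C * (ε / (C + 1)) := norm_eval_smul_le hpow
    _ ≤ (C + 1) * (ε / (C + 1)) := by gcongr; linarith
    _ = ε := mul_div_cancel₀ ε hC.ne'

theorem statement8 (ℓ : ℕ) (hℓ : 0 < ℓ) (R : Set ℤ)
    (hR : IsSetOfMultRecurrence ℓ R)
    (p : Polynomial ℤ) (hp0 : p.coeff 0 = 0) (hpdeg : p.natDegree ≤ ℓ)
    (α : ℝ) (ε : ℝ) (hε : 0 < ε) :
    ∃ r ∈ R, r ≠ 0 ∧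
      Int.fract (((p.eval r : ℤ) : ℝ) * α) ∈ Set.Icc 0 ε ∪ Set.Ico (1 - ε) 1 := by
  simpa only [← norm_coe_unitAddCircle_le_iff, ← zsmul_eq_mul, AddCircle.coe_zsmul] using
    statement8_general hR hp0 hpdeg (α : UnitAddCircle) hε
end
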